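/- arXiv:2510.15861 — 13 statements merged into one kernel-verified Lean document; each statement's English description precedes it below -/
import Mathlib

section
/- Let m ≥ 1, let h_1 ≥ h_2 ≥ … ≥ h_m ≥ 0 be reals, and let F be the mixing set F = {(z,x) ∈ ℝ_{≥0} × {0,1}^m : for every i ∈ {1,…,m}, x_i = 0 implies z ≥ h_i}. Then for every l ≥ 1 and every choice of indices 1 ≤ t_1 < t_2 < … < t_l ≤ m, with the convention h_{t_{l+1}} := 0, every (z,x) ∈ F satisfies the star inequality z + Σ_{ι=1}^{l} (h_{t_ι} − h_{t_{ι+1}}) x_{t_ι} ≥ h_{t_1}. -/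
theorem star_aux (g y : ℕ → ℝ) (z : ℝ) (l : ℕ)
    (hg : ∀ i, 1 ≤ i → i ≤ l → g (i + 1) ≤ g i)
    (hy : ∀ i, 1 ≤ i → i ≤ l → (y i = 0 ∧ g i ≤ z) ∨ y i = 1) (n : ℕ) (hn : n ≤ l) :
    (g 1 ≤ z + ∑ i ∈ Finset.Icc 1 n, (g i - g (i + 1)) * y i) ∨
    (g 1 = g (n + 1) + ∑ i ∈ Finset.Icc 1 n, (g i - g (i + 1)) * y i) := by
  induction n with
  | zero => right; simp
  | succ k ih =>
    rw [Finset.sum_Icc_succ_top (by omega)]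
    have h1 := hg (k + 1) (by omega) hn
    rcases hy (k + 1) (by omega) hn with ⟨h0, hz⟩ | h0 <;> rw [h0] <;>
      rcases ih (by omega) with h2 | h2
    · left; linarith
    · left; linarith
    · left; linarith
    · right; linarith

/-- **Star inequalities are valid for the mixing set.**
For `m ≥ 1` and `h 1 ≥ h 2 ≥ … ≥ h m ≥ 0`, every point `(z, x)` of the mixing set
`F = {(z,x) ∈ ℝ₊ × {0,1}^m : x i = 0 → z ≥ h i}` satisfies the star inequality
`z + ∑_{ι=1}^{l} (h (t ι) − h (t (ι+1))) x (t ι) ≥ h (t 1)` for every `l ≥ 1` and every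
strictly increasing choice of indices `1 ≤ t 1 < … < t l ≤ m`, with the convention
`h (t (l+1)) := 0`. -/
theorem star_inequality_valid_for_mixing_set
    (m : ℕ) (hm : 1 ≤ m) (h : ℕ → ℝ)
    (hmono : ∀ i j : ℕ, 1 ≤ i → i ≤ j → j ≤ m → h j ≤ h i)
    (hnonneg : ∀ i : ℕ, 1 ≤ i → i ≤ m → 0 ≤ h i)
    (z : ℝ) (x : ℕ → ℝ)
    (hz : 0 ≤ z)
    (hxbin : ∀ i : ℕ, 1 ≤ i → i ≤ m → x i = 0 ∨ x i = 1)
    (hmix : ∀ i : ℕ, 1 ≤ i → i ≤ m → x i = 0 → h i ≤ z)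
    (l : ℕ) (hl : 1 ≤ l)
    (t : ℕ → ℕ)
    (ht1 : 1 ≤ t 1) (htl : t l ≤ m)
    (htmono : ∀ ι κ : ℕ, 1 ≤ ι → ι < κ → κ ≤ l → t ι < t κ) :
    h (t 1) ≤ z + ∑ ι ∈ Finset.Icc 1 l,
      (h (t ι) - (if ι < l then h (t (ι + 1)) else 0)) * x (t ι) := by
  have hpos : ∀ i, 1 ≤ i → i ≤ l → 1 ≤ t i := by
    intro i hi hil
    rcases Nat.eq_or_lt_of_le hi with e | e
    · rw [← e]; exact ht1
    · have := htmono 1 i le_rfl e hil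
      omega
  have hle : ∀ i, 1 ≤ i → i ≤ l → t i ≤ m := by
    intro i hi hil
    rcases Nat.eq_or_lt_of_le hil with e | e
    · rw [e]; exact htl
    · have := htmono i l hi e le_rfl
      omega
  have key := star_aux (fun i => if i ≤ l then h (t i) else 0) (fun i => x (t i)) z l
    (by
      intro i hi hil
      by_cases e : i + 1 ≤ l
      · simp only [e, hil, if_true]
        exact hmono _ _ (hpos i hi hil) (htmono i (i + 1) hi (by omega) e).le
          (hle _ (by omega) e)
      · simp only [e, hil, if_true, if_false]
        exact hnonneg _ (hpos i hi hil) (hle i hi hil))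
    (by
      intro i hi hil
      simp only [hil, if_true]
      rcases hxbin _ (hpos i hi hil) (hle i hi hil) with e | e
      · exact Or.inl ⟨e, hmix _ (hpos i hi hil) (hle i hi hil) e⟩
      · exact Or.inr e) l le_rfl
  have hs : ∑ ι ∈ Finset.Icc 1 l,
      (h (t ι) - (if ι < l then h (t (ι + 1)) else 0)) * x (t ι) =
      ∑ i ∈ Finset.Icc 1 l, ((if i ≤ l then h (t i) else 0) -
        (if i + 1 ≤ l then h (t (i + 1)) else 0)) * x (t i) := by
    apply Finset.sum_congr rfl
    intro i hi
    rw [if_pos (Finset.mem_Icc.mp hi).2]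
    rfl
  rw [hs]
  have hn : ¬ (l + 1 ≤ l) := by omega
  simp only [hl, hn, if_true, if_false] at key
  rcases key with k | k <;> linarith
end

section
/- For every l ≥ 1 and every choice of indices 1 ≤ t_1 < t_2 < … < t_l ≤ p, with the convention h_{t_{l+1}} := h_{p+1} (where h_{m+1} := 0), every (z,x) ∈ F_c satisfies the strengthened star inequality z + Σ_{ι=1}^{l} (h_{t_ι} − h_{t_{ι+1}}) x_{t_ι} ≥ h_{t_1}. -/
/-- **Strengthened star inequalities are valid for the mixing set with a knapsack
constraint** (Luedtke–Ahmed–Nemhauser). Here `p = max{k : ∑_{i=1}^k π i ≤ ε}` is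
characterized by the hypotheses `hpsum`/`hpmax`, and the convention
`h (t (l+1)) := h (p+1)` (with `h (m+1) := 0`, hypothesis `hconv`) is used. -/
theorem strengthened_star_inequality_valid
    (m : ℕ) (hm : 1 ≤ m) (h : ℕ → ℝ)
    (hmono : ∀ i j : ℕ, 1 ≤ i → i ≤ j → j ≤ m → h j ≤ h i)
    (hnonneg : ∀ i : ℕ, 1 ≤ i → i ≤ m → 0 ≤ h i)
    (hconv : h (m + 1) = 0)
    (π : ℕ → ℝ) (hπpos : ∀ i : ℕ, 1 ≤ i → i ≤ m → 0 < π i)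
    (hπsum : ∑ i ∈ Finset.Icc 1 m, π i = 1)
    (ε : ℝ) (hε0 : 0 ≤ ε) (hε1 : ε ≤ 1)
    (hπε : ∀ i : ℕ, 1 ≤ i → i ≤ m → π i ≤ ε)
    (p : ℕ) (hp1 : 1 ≤ p) (hpm : p ≤ m)
    (hpsum : ∑ i ∈ Finset.Icc 1 p, π i ≤ ε)
    (hpmax : ∀ k : ℕ, k ≤ m → (∑ i ∈ Finset.Icc 1 k, π i) ≤ ε → k ≤ p)
    (z : ℝ) (x : ℕ → ℝ) (hz : 0 ≤ z)
    (hxbin : ∀ i : ℕ, 1 ≤ i → i ≤ m → x i = 0 ∨ x i = 1)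
    (hmix : ∀ i : ℕ, 1 ≤ i → i ≤ m → x i = 0 → h i ≤ z)
    (hknap : ∑ i ∈ Finset.Icc 1 m, π i * x i ≤ ε)
    (l : ℕ) (hl : 1 ≤ l)
    (t : ℕ → ℕ)
    (ht1 : 1 ≤ t 1) (htl : t l ≤ p)
    (htmono : ∀ ι κ : ℕ, 1 ≤ ι → ι < κ → κ ≤ l → t ι < t κ) :
    h (t 1) ≤ z + ∑ ι ∈ Finset.Icc 1 l,
      (h (t ι) - (if ι < l then h (t (ι + 1)) else h (p + 1))) * x (t ι) := by
  have hmono' : ∀ i j : ℕ, 1 ≤ i → i ≤ j → j ≤ m + 1 → h j ≤ h i := by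
    intro i j hi hij hj
    rcases Nat.lt_or_ge j (m + 1) with hj' | hj'
    · exact hmono i j hi hij (by omega)
    · have : j = m + 1 := by omega
      subst this
      rcases Nat.lt_or_ge i (m + 1) with hi' | hi'
      · rw [hconv]; exact hnonneg i hi (by omega)
      · have : i = m + 1 := by omega
        rw [this]
  have hzp : h (p + 1) ≤ z := by
    rcases Nat.lt_or_ge p m with hlt | hge
    · by_contra hcon
      have hall : ∀ i ∈ Finset.Icc 1 (p + 1), π i = π i * x i := by
        intro i hi
        rw [Finset.mem_Icc] at hi
        rcases hxbin i hi.1 (by omega) with h0 | h1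
        · exact absurd ((hmono i (p + 1) hi.1 hi.2 (by omega)).trans
            (hmix i hi.1 (by omega) h0)) hcon
        · rw [h1, mul_one]
      have hle : ∑ i ∈ Finset.Icc 1 (p + 1), π i ≤ ε := by
        rw [Finset.sum_congr rfl hall]
        refine le_trans (Finset.sum_le_sum_of_subset_of_nonneg
          (Finset.Icc_subset_Icc le_rfl (by omega)) ?_) hknap
        intro i hi _
        rw [Finset.mem_Icc] at hi
        have := hπpos i hi.1 hi.2
        rcases hxbin i hi.1 hi.2 with h0 | h1
        · rw [h0, mul_zero]
        · rw [h1, mul_one]; exact this.le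
      have := hpmax (p + 1) (by omega) hle
      omega
    · have : p = m := by omega
      rw [this, hconv]; exact hz
  have htb : ∀ ι, 1 ≤ ι → ι ≤ l → 1 ≤ t ι ∧ t ι ≤ p := by
    intro ι h1 h2
    constructor
    · rcases Nat.eq_or_lt_of_le h1 with e | e
      · rw [← e]; exact ht1
      · exact ht1.trans (htmono 1 ι le_rfl e h2).le
    · rcases Nat.eq_or_lt_of_le h2 with e | e
      · rw [e]; exact htl
      · exact (htmono ι l h1 e le_rfl).le.trans htl
  have hd : ∀ ι, 1 ≤ ι → ι ≤ l →
      (if ι < l then h (t (ι + 1)) else h (p + 1)) ≤ h (t ι) := by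
    intro ι h1 h2
    have hb := htb ι h1 h2
    split_ifs with hlt
    · exact hmono' _ _ hb.1 (htmono ι (ι + 1) h1 (by omega) (by omega)).le
        (by have := (htb (ι + 1) (by omega) (by omega)).2; omega)
    · exact hmono' _ _ hb.1 (by omega) (by omega)
  have key : ∀ d k : ℕ, 1 ≤ k → k + d = l →
      h (t k) ≤ z + ∑ ι ∈ Finset.Ico k (l + 1),
      (h (t ι) - (if ι < l then h (t (ι + 1)) else h (p + 1))) * x (t ι) := by
    intro d
    induction d with
    | zero =>
      intro k hk hkl
      have hkl' : k = l := by omega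
      subst hkl'
      have hb := htb k hk le_rfl
      have hdk := hd k hk le_rfl
      rw [if_neg (lt_irrefl k)] at hdk
      rw [Finset.sum_eq_sum_Ico_succ_bot (by omega), Finset.Ico_self, Finset.sum_empty,
        if_neg (lt_irrefl k)]
      rcases hxbin (t k) hb.1 (by omega) with h0 | h1
      · have := hmix (t k) hb.1 (by omega) h0
        rw [h0]; linarith
      · rw [h1]; linarith
    | succ d ih =>
      intro k hk hkl
      have hb := htb k hk (by omega)
      have IH := ih (k + 1) (by omega) (by omega)
      have hnn : 0 ≤ ∑ ι ∈ Finset.Ico (k + 1) (l + 1),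
          (h (t ι) - (if ι < l then h (t (ι + 1)) else h (p + 1))) * x (t ι) := by
        apply Finset.sum_nonneg
        intro ι hι
        rw [Finset.mem_Ico] at hι
        have hbι := htb ι (by omega) (by omega)
        apply mul_nonneg (sub_nonneg.2 (hd ι (by omega) (by omega)))
        rcases hxbin (t ι) hbι.1 (by omega) with h0 | h1
        · rw [h0]
        · rw [h1]; exact zero_le_one
      rw [Finset.sum_eq_sum_Ico_succ_bot (by omega), if_pos (by omega : k < l)]
      rcases hxbin (t k) hb.1 (by omega) with h0 | h1
      · have := hmix (t k) hb.1 (by omega) h0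
        rw [h0]; linarith
      · rw [h1]; linarith
  have e : Finset.Icc 1 l = Finset.Ico 1 (l + 1) := by
    ext i; simp only [Finset.mem_Icc, Finset.mem_Ico]; omega
  rw [e]
  exact key (l - 1) 1 le_rfl (by omega)
end

section
/- Assume 1 ≤ p < m. Let r ∈ {1,…,p}, let 1 ≤ t_1 < … < t_l ≤ r, and let p+1 ≤ q_1 < q_2 < … < q_{p−r} ≤ m. Define φ_{q_1} = h_{r+1} − h_{r+2} and, for ι = 2,…,p−r, φ_{q_ι} = max{ φ_{q_{ι−1}}, h_{r+1} − h_{r+ι+1} − Σ_{k=1}^{ι−1} φ_{q_k} }. Then, with the convention h_{t_{l+1}} := h_{r+1}, every (z,x) ∈ F_c^= satisfies z + Σ_{ι=1}^{l} (h_{t_ι} − h_{t_{ι+1}}) x_{t_ι} + Σ_{ι=1}^{p−r} φ_{q_ι} (1 − x_{q_ι}) ≥ h_{t_1} (when r = p the sum over the q-indices is empty). -/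
/-- **Luedtke–Ahmed–Nemhauser inequalities for the mixing set with a cardinality
constraint.** Here `F_c^= = {(z,x) ∈ ℝ₊ × {0,1}^m : x i = 0 → z ≥ h i, ∑ x i ≤ p}`,
`r ∈ {1,…,p}`, `1 ≤ t 1 < … < t l ≤ r`, `p+1 ≤ q 1 < … < q (p−r) ≤ m`, with
`φ 1 = h (r+1) − h (r+2)` and
`φ ι = max (φ (ι−1)) (h (r+1) − h (r+ι+1) − ∑_{k=1}^{ι−1} φ k)` for `2 ≤ ι ≤ p−r`,
and the convention `h (t (l+1)) := h (r+1)`. -/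
theorem luedtke_lifted_inequality_valid
    (m p : ℕ) (hm : 1 ≤ m) (hp1 : 1 ≤ p) (hpm : p < m)
    (h : ℕ → ℝ)
    (hmono : ∀ i j : ℕ, 1 ≤ i → i ≤ j → j ≤ m → h j ≤ h i)
    (hnonneg : ∀ i : ℕ, 1 ≤ i → i ≤ m → 0 ≤ h i)
    (r : ℕ) (hr1 : 1 ≤ r) (hrp : r ≤ p)
    (l : ℕ) (hl1 : 1 ≤ l)
    (t : ℕ → ℕ) (ht1 : 1 ≤ t 1) (htl : t l ≤ r)
    (htmono : ∀ ι κ : ℕ, 1 ≤ ι → ι < κ → κ ≤ l → t ι < t κ)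
    (q : ℕ → ℕ)
    (hqrange : ∀ ι : ℕ, 1 ≤ ι → ι ≤ p - r → p + 1 ≤ q ι ∧ q ι ≤ m)
    (hqmono : ∀ ι κ : ℕ, 1 ≤ ι → ι < κ → κ ≤ p - r → q ι < q κ)
    (φ : ℕ → ℝ)
    (hφ1 : 1 ≤ p - r → φ 1 = h (r + 1) - h (r + 2))
    (hφrec : ∀ ι : ℕ, 2 ≤ ι → ι ≤ p - r →
      φ ι = max (φ (ι - 1))
        (h (r + 1) - h (r + ι + 1) - ∑ k ∈ Finset.Icc 1 (ι - 1), φ k))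
    (z : ℝ) (x : ℕ → ℝ) (hz : 0 ≤ z)
    (hxbin : ∀ i : ℕ, 1 ≤ i → i ≤ m → x i = 0 ∨ x i = 1)
    (hmix : ∀ i : ℕ, 1 ≤ i → i ≤ m → x i = 0 → h i ≤ z)
    (hcard : ∑ i ∈ Finset.Icc 1 m, x i ≤ (p : ℝ)) :
    h (t 1) ≤ z + (∑ ι ∈ Finset.Icc 1 l,
        (h (t ι) - (if ι < l then h (t (ι + 1)) else h (r + 1))) * x (t ι))
      + ∑ ι ∈ Finset.Icc 1 (p - r), φ ι * (1 - x (q ι)) := by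
  have hφmono1 : ∀ ι, 1 ≤ ι → ι + 1 ≤ p - r → φ ι ≤ φ (ι + 1) := by
    intro ι h1 h2
    rw [hφrec (ι + 1) (by omega) h2]
    exact le_max_left _ _
  have hφmono : ∀ d ι, 1 ≤ ι → ι + d ≤ p - r → φ ι ≤ φ (ι + d) := by
    intro d
    induction d with
    | zero => intro ι _ _; simp
    | succ d ih =>
      intro ι h1 h2
      exact (ih ι h1 (by omega)).trans (hφmono1 (ι + d) (by omega) (by omega))
  have hφnn : ∀ ι, 1 ≤ ι → ι ≤ p - r → 0 ≤ φ ι := by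
    intro ι h1 h2
    have e := hφmono (ι - 1) 1 le_rfl (by omega)
    rw [show 1 + (ι - 1) = ι by omega] at e
    have e1 := hφ1 (by omega)
    have e2 := hmono (r + 1) (r + 2) (by omega) (by omega) (by omega)
    linarith
  have hφsum : ∀ k, k ≤ p - r → h (r + 1) - h (r + k + 1) ≤ ∑ j ∈ Finset.Icc 1 k, φ j := by
    intro k hk
    rcases k with _ | k
    · simp
    · rw [Finset.sum_Icc_succ_top (by omega)]
      rcases k with _ | k
      · have := hφ1 (by omega)
        simp [this]
      · have e := hφrec (k + 1 + 1) (by omega) hk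
        have e2 := le_max_right (φ (k + 1 + 1 - 1)) (h (r + 1) - h (r + (k + 1 + 1) + 1) - ∑ k ∈ Finset.Icc 1 (k + 1 + 1 - 1), φ k)
        rw [← e] at e2
        simp only [Nat.add_sub_cancel] at e2
        linarith
  have hk : ∀ n, n ≤ p - r → ∃ k, k ≤ n ∧ ∑ ι ∈ Finset.Icc 1 n, x (q ι) = (n : ℝ) - k ∧
      ∑ j ∈ Finset.Icc 1 k, φ j ≤ ∑ ι ∈ Finset.Icc 1 n, φ ι * (1 - x (q ι)) := by
    intro n
    induction n with
    | zero => intro _; exact ⟨0, le_rfl, by simp, by simp⟩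
    | succ n ih =>
      intro hn
      obtain ⟨k, hkn, h1, h2⟩ := ih (by omega)
      have hq := hqrange (n + 1) (by omega) hn
      rcases hxbin (q (n + 1)) (by omega) hq.2 with h0 | h0
      · refine ⟨k + 1, by omega, ?_, ?_⟩
        · rw [Finset.sum_Icc_succ_top (by omega), h1, h0]; push_cast; ring
        · rw [Finset.sum_Icc_succ_top (by omega), Finset.sum_Icc_succ_top (by omega), h0]
          have e := hφmono (n - k) (k + 1) (by omega) (by omega)
          rw [show k + 1 + (n - k) = n + 1 by omega] at e
          linarith
      · refine ⟨k, by omega, ?_, ?_⟩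
        · rw [Finset.sum_Icc_succ_top (by omega), h1, h0]; push_cast; ring
        · rw [Finset.sum_Icc_succ_top (by omega), h0]; linarith
  obtain ⟨k, hkn, hk1, hk2⟩ := hk (p - r) le_rfl
  have hxnn : ∀ i, 1 ≤ i → i ≤ m → 0 ≤ x i := by
    intro i h1 h2
    rcases hxbin i h1 h2 with e | e <;> rw [e] <;> norm_num
  have hzk : h (r + k + 1) ≤ z := by
    by_contra hcon
    have hone : ∀ i, 1 ≤ i → i ≤ r + k + 1 → x i = 1 := by
      intro i h1 h2
      rcases hxbin i h1 (by omega) with e | e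
      · exact absurd ((hmono i (r + k + 1) h1 h2 (by omega)).trans (hmix i h1 (by omega) e)) hcon
      · exact e
    have hs1 : ∑ i ∈ Finset.Icc 1 (r + k + 1), x i = (r : ℝ) + k + 1 := by
      rw [Finset.sum_congr rfl (g := fun _ => (1 : ℝ))
        (fun i hi => hone i (Finset.mem_Icc.1 hi).1 (Finset.mem_Icc.1 hi).2)]
      simp
    rcases Nat.lt_or_ge k (p - r) with hlt | hge
    · have hinj : Set.InjOn q (Finset.Icc 1 (p - r) : Finset ℕ) := by
        intro a ha b hb hab
        simp only [Finset.coe_Icc, Set.mem_Icc] at ha hb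
        rcases lt_trichotomy a b with c | c | c
        · have := hqmono a b ha.1 c hb.2; omega
        · exact c
        · have := hqmono b a hb.1 c ha.2; omega
      have hs2 : ∑ i ∈ (Finset.Icc 1 (p - r)).image q, x i = ∑ ι ∈ Finset.Icc 1 (p - r), x (q ι) :=
        Finset.sum_image hinj
      have hdis : Disjoint (Finset.Icc 1 (r + k + 1)) ((Finset.Icc 1 (p - r)).image q) := by
        rw [Finset.disjoint_left]
        intro a ha hc
        obtain ⟨b, hb, rfl⟩ := Finset.mem_image.1 hc
        rw [Finset.mem_Icc] at ha hb
        have := hqrange b hb.1 hb.2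
        omega
      have hsub : Finset.Icc 1 (r + k + 1) ∪ (Finset.Icc 1 (p - r)).image q ⊆ Finset.Icc 1 m := by
        intro a ha
        rcases Finset.mem_union.1 ha with ha | ha
        · rw [Finset.mem_Icc] at ha ⊢; omega
        · obtain ⟨b, hb, rfl⟩ := Finset.mem_image.1 ha
          rw [Finset.mem_Icc] at hb ⊢
          have := hqrange b hb.1 hb.2
          omega
      have hle := Finset.sum_le_sum_of_subset_of_nonneg (f := x) hsub
        (fun i hi _ => hxnn i (Finset.mem_Icc.1 hi).1 (Finset.mem_Icc.1 hi).2)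
      rw [Finset.sum_union hdis, hs1, hs2, hk1, Nat.cast_sub hrp] at hle
      linarith
    · have hkp : (r : ℝ) + k = p := by
        have : r + k = p := by omega
        exact_mod_cast this
      have hle := Finset.sum_le_sum_of_subset_of_nonneg (f := x)
        (Finset.Icc_subset_Icc_right (a := 1) (show r + k + 1 ≤ m by omega))
        (fun i hi _ => hxnn i (Finset.mem_Icc.1 hi).1 (Finset.mem_Icc.1 hi).2)
      linarith
  have htle : ∀ ι, 1 ≤ ι → ι ≤ l → 1 ≤ t ι ∧ t ι ≤ r := by
    intro ι h1 h2
    constructor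
    · rcases h1.eq_or_lt with e | e
      · rw [← e]; exact ht1
      · have := htmono 1 ι le_rfl e h2; omega
    · rcases h2.eq_or_lt with e | e
      · rw [e]; exact htl
      · have := htmono ι l h1 e le_rfl; omega
  have hcoef : ∀ ι, 1 ≤ ι → ι ≤ l →
      0 ≤ h (t ι) - (if ι < l then h (t (ι + 1)) else h (r + 1)) := by
    intro ι h1 h2
    have a := htle ι h1 h2
    split_ifs with c
    · have b := htle (ι + 1) (by omega) c
      have := hmono _ _ a.1 (htmono ι (ι + 1) h1 (by omega) c).le (by omega)
      linarith
    · have := hmono (t ι) (r + 1) a.1 (by omega) (by omega)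
      linarith
  have htel : ∀ n, n ≤ l →
      ((∑ ι ∈ Finset.Icc 1 n,
        (h (t ι) - (if ι < l then h (t (ι + 1)) else h (r + 1))) * x (t ι))
          = h (t 1) - (if n < l then h (t (n + 1)) else h (r + 1))) ∨
      h (t 1) ≤ z + ∑ ι ∈ Finset.Icc 1 n,
        (h (t ι) - (if ι < l then h (t (ι + 1)) else h (r + 1))) * x (t ι) := by
    intro n
    induction n with
    | zero =>
      intro _
      left
      rw [if_pos (by omega)]
      simp
    | succ n ih =>
      intro hn
      have a := htle (n + 1) (by omega) hn
      have c := hcoef (n + 1) (by omega) hn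
      rw [Finset.sum_Icc_succ_top (by omega)]
      rcases ih (by omega) with e | e
      · rw [if_pos (by omega)] at e
        rcases hxbin (t (n + 1)) a.1 (by omega) with e0 | e0
        · right
          have := hmix _ a.1 (by omega) e0
          rw [e, e0]; linarith
        · left
          rw [e, e0]; ring
      · right
        have := mul_nonneg c (hxnn (t (n + 1)) a.1 (by omega))
        linarith
  have hk3 := hφsum k hkn
  rcases htel l le_rfl with e | e
  · rw [if_neg (lt_irrefl l)] at e
    rw [e]; linarith
  · have : 0 ≤ ∑ j ∈ Finset.Icc 1 k, φ j := Finset.sum_nonneg (fun j hj => by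
      rw [Finset.mem_Icc] at hj
      exact hφnn j hj.1 (by omega))
    linarith
end

section
/- Assume 1 ≤ p < m. Let r ∈ {1,…,p}, let 1 ≤ t_1 < … < t_l ≤ r, and let q_1,…,q_{p−r} be distinct indices in {1,…,m} with q_ι ≥ r+ι+1 for every ι ∈ {1,…,p−r}. Define φ_{q_1} = h_{r+1} − h_{r+2} and, for ι = 2,…,p−r, φ_{q_ι} = max{ φ_{q_{ι−1}}, h_{r+1} − h_{r+ι+1} − Σ_{k=1,…,ι−1 : q_k ≥ r+ι+1} φ_{q_k} }. Then, with the convention h_{t_{l+1}} := h_{r+1}, every (z,x) ∈ F_c^= satisfies z + Σ_{ι=1}^{l} (h_{t_ι} − h_{t_{ι+1}}) x_{t_ι} + Σ_{ι=1}^{p−r} φ_{q_ι} (1 − x_{q_ι}) ≥ h_{t_1}. -/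
theorem aux_telescope (g w : ℕ → ℝ) (z : ℝ) (n : ℕ)
    (hg : ∀ i, 1 ≤ i → i ≤ n → g (i + 1) ≤ g i)
    (hw : ∀ i, 1 ≤ i → i ≤ n → (w i = 0 ∧ g i ≤ z) ∨ w i = 1) :
    g 1 ≤ max z (g (n + 1)) + ∑ i ∈ Finset.Icc 1 n, (g i - g (i + 1)) * w i := by
  induction n with
  | zero => simp
  | succ n ih =>
    have ih' := ih (fun i h1 h2 => hg i h1 (by omega)) (fun i h1 h2 => hw i h1 (by omega))
    rw [Finset.sum_Icc_succ_top (by omega)]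
    have hgn := hg (n + 1) (by omega) le_rfl
    have a1 := le_max_left z (g (n + 1 + 1))
    have a2 := le_max_right z (g (n + 1 + 1))
    rcases hw (n + 1) (by omega) le_rfl with ⟨h0, h1⟩ | h1
    · rw [max_eq_left h1] at ih'
      rw [h0]; linarith
    · rw [h1]
      have : max z (g (n + 1)) ≤ max z (g (n + 1 + 1)) + (g (n + 1) - g (n + 1 + 1)) :=
        max_le (by linarith) (by linarith)
      linarith


/-- **Küçükyavuz inequalities for the mixing set with a cardinality constraint.**
Here `F_c^= = {(z,x) ∈ ℝ₊ × {0,1}^m : x i = 0 → z ≥ h i, ∑ x i ≤ p}`,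
`r ∈ {1,…,p}`, `1 ≤ t 1 < … < t l ≤ r`, the indices `q 1, …, q (p−r)` are distinct
in `{1,…,m}` with `q ι ≥ r+ι+1`, `φ 1 = h (r+1) − h (r+2)` and
`φ ι = max (φ (ι−1)) (h (r+1) − h (r+ι+1) − ∑_{k<ι : q k ≥ r+ι+1} φ k)` for
`2 ≤ ι ≤ p−r`, and the convention `h (t (l+1)) := h (r+1)`. -/
theorem kucukyavuz_lifted_inequality_valid
    (m p : ℕ) (hm : 1 ≤ m) (hp1 : 1 ≤ p) (hpm : p < m)
    (h : ℕ → ℝ)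
    (hmono : ∀ i j : ℕ, 1 ≤ i → i ≤ j → j ≤ m → h j ≤ h i)
    (hnonneg : ∀ i : ℕ, 1 ≤ i → i ≤ m → 0 ≤ h i)
    (r : ℕ) (hr1 : 1 ≤ r) (hrp : r ≤ p)
    (l : ℕ) (hl1 : 1 ≤ l)
    (t : ℕ → ℕ) (ht1 : 1 ≤ t 1) (htl : t l ≤ r)
    (htmono : ∀ ι κ : ℕ, 1 ≤ ι → ι < κ → κ ≤ l → t ι < t κ)
    (q : ℕ → ℕ)
    (hqrange : ∀ ι : ℕ, 1 ≤ ι → ι ≤ p - r → r + ι + 1 ≤ q ι ∧ q ι ≤ m)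
    (hqinj : ∀ ι κ : ℕ, 1 ≤ ι → ι ≤ p - r → 1 ≤ κ → κ ≤ p - r → q ι = q κ → ι = κ)
    (φ : ℕ → ℝ)
    (hφ1 : 1 ≤ p - r → φ 1 = h (r + 1) - h (r + 2))
    (hφrec : ∀ ι : ℕ, 2 ≤ ι → ι ≤ p - r →
      φ ι = max (φ (ι - 1))
        (h (r + 1) - h (r + ι + 1) -
          ∑ k ∈ (Finset.Icc 1 (ι - 1)).filter (fun k => r + ι + 1 ≤ q k), φ k))
    (z : ℝ) (x : ℕ → ℝ) (hz : 0 ≤ z)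
    (hxbin : ∀ i : ℕ, 1 ≤ i → i ≤ m → x i = 0 ∨ x i = 1)
    (hmix : ∀ i : ℕ, 1 ≤ i → i ≤ m → x i = 0 → h i ≤ z)
    (hcard : ∑ i ∈ Finset.Icc 1 m, x i ≤ (p : ℝ)) :
    h (t 1) ≤ z + (∑ ι ∈ Finset.Icc 1 l,
        (h (t ι) - (if ι < l then h (t (ι + 1)) else h (r + 1))) * x (t ι))
      + ∑ ι ∈ Finset.Icc 1 (p - r), φ ι * (1 - x (q ι)) := by
  have htbound : ∀ ι, 1 ≤ ι → ι ≤ l → 1 ≤ t ι ∧ t ι ≤ r := by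
    intro ι h1 h2
    constructor
    · rcases Nat.eq_or_lt_of_le h1 with e | e
      · rw [← e]; exact ht1
      · have := htmono 1 ι le_rfl e h2; omega
    · rcases Nat.eq_or_lt_of_le h2 with e | e
      · rw [e]; exact htl
      · have := htmono ι l h1 e le_rfl; omega
  have hx0 : ∀ i, 1 ≤ i → i ≤ m → 0 ≤ x i := by
    intro i h1 h2
    rcases hxbin i h1 h2 with e | e <;> rw [e] <;> norm_num
  have hx1 : ∀ i, 1 ≤ i → i ≤ m → x i ≤ 1 := by
    intro i h1 h2
    rcases hxbin i h1 h2 with e | e <;> rw [e] <;> norm_num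
  obtain ⟨n, hn⟩ : ∃ n, n = p - r := ⟨_, rfl⟩
  rw [← hn] at hqrange hqinj hφ1 hφrec ⊢
  -- monotonicity of φ
  have hstep : ∀ k, 1 ≤ k → k + 1 ≤ n → φ k ≤ φ (k + 1) := by
    intro k h1 h2
    rw [hφrec (k + 1) (by omega) h2]
    exact le_max_left _ _
  have hφmono : ∀ i j, 1 ≤ i → i ≤ j → j ≤ n → φ i ≤ φ j := by
    intro i j h1 h2
    induction j, h2 using Nat.le_induction with
    | base => intro _; exact le_rfl
    | succ k hk ih => intro h3; exact (ih (by omega)).trans (hstep k (by omega) h3)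
  have hφ0 : ∀ i, 1 ≤ i → i ≤ n → 0 ≤ φ i := by
    intro i h1 h2
    refine le_trans ?_ (hφmono 1 i le_rfl h1 h2)
    rw [hφ1 (by omega)]
    have := hmono (r + 1) (r + 2) (by omega) (by omega) (by omega)
    linarith
  have hterm : ∀ k ∈ Finset.Icc 1 n, 0 ≤ φ k * (1 - x (q k)) := by
    intro k hk
    rw [Finset.mem_Icc] at hk
    have hq := hqrange k hk.1 hk.2
    have := hx1 (q k) (by omega) hq.2
    exact mul_nonneg (hφ0 k hk.1 hk.2) (by linarith)
  have hS0 : 0 ≤ ∑ k ∈ Finset.Icc 1 n, φ k * (1 - x (q k)) := Finset.sum_nonneg hterm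
  -- telescoping part
  have hA := aux_telescope (fun i => if i ≤ l then h (t i) else h (r + 1)) (fun i => x (t i)) z l
    (by
      intro i h1 h2
      have b := htbound i h1 h2
      simp only [h2, if_true]
      split_ifs with h3
      · have b' := htbound (i + 1) (by omega) h3
        exact hmono _ _ b.1 (htmono i (i + 1) h1 (by omega) h3).le (by omega)
      · exact hmono _ _ b.1 (by omega) (by omega))
    (by
      intro i h1 h2
      have b := htbound i h1 h2
      simp only [h2, if_true]
      rcases hxbin (t i) b.1 (by omega) with e | e
      · exact Or.inl ⟨e, hmix _ b.1 (by omega) e⟩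
      · exact Or.inr e)
  have hsum : ∑ i ∈ Finset.Icc 1 l, ((if i ≤ l then h (t i) else h (r + 1))
        - (if i + 1 ≤ l then h (t (i + 1)) else h (r + 1))) * x (t i)
      = ∑ ι ∈ Finset.Icc 1 l,
        (h (t ι) - (if ι < l then h (t (ι + 1)) else h (r + 1))) * x (t ι) := by
    apply Finset.sum_congr rfl
    intro i hi
    rw [Finset.mem_Icc] at hi
    rw [if_pos hi.2]
    rfl
  rw [hsum, if_pos hl1, if_neg (by omega)] at hA
  suffices hB : h (r + 1) ≤ z + ∑ k ∈ Finset.Icc 1 n, φ k * (1 - x (q k)) by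
    have := max_le (show z ≤ z + ∑ k ∈ Finset.Icc 1 n, φ k * (1 - x (q k)) by linarith) hB
    linarith
  -- the first zero
  have hex : ∃ s, 1 ≤ s ∧ s ≤ m ∧ x s = 0 := by
    by_contra hcon
    push Not at hcon
    have : ∑ i ∈ Finset.Icc 1 m, x i = ∑ i ∈ Finset.Icc 1 m, (1 : ℝ) := by
      apply Finset.sum_congr rfl
      intro i hi
      rw [Finset.mem_Icc] at hi
      exact (hxbin i hi.1 hi.2).resolve_left (hcon i hi.1 hi.2)
    rw [this] at hcard
    simp at hcard
    omega
  classical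
  obtain ⟨s, ⟨hs1, hsm, hxs⟩, hmin⟩ : ∃ s, (1 ≤ s ∧ s ≤ m ∧ x s = 0) ∧
      ∀ i, 1 ≤ i → i < s → x i = 1 := by
    refine ⟨Nat.find hex, Nat.find_spec hex, ?_⟩
    intro i h1 h2
    have h3 := (Nat.find_spec hex).2.1
    exact (hxbin i h1 (by omega)).resolve_left
      (fun e => Nat.find_min hex h2 ⟨h1, by omega, e⟩)
  have hzs := hmix s hs1 hsm hxs
  by_cases hsr : s ≤ r + 1
  · have := hmono s (r + 1) hs1 hsr (by omega)
    linarith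
  -- split the cardinality sum
  have hsplit : ∑ i ∈ Finset.Icc 1 m, x i
      = ((s : ℝ) - 1) + ∑ i ∈ Finset.Icc s m, x i := by
    have e : Finset.Icc 1 m = Finset.Icc 1 (s - 1) ∪ Finset.Icc s m := by
      ext i; simp only [Finset.mem_union, Finset.mem_Icc]; omega
    have d : Disjoint (Finset.Icc 1 (s - 1)) (Finset.Icc s m) := by
      rw [Finset.disjoint_left]; intro i; simp only [Finset.mem_Icc]; omega
    rw [e, Finset.sum_union d]
    congr 1
    have : ∑ i ∈ Finset.Icc 1 (s - 1), x i = ∑ i ∈ Finset.Icc 1 (s - 1), (1 : ℝ) := by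
      apply Finset.sum_congr rfl
      intro i hi
      rw [Finset.mem_Icc] at hi
      exact hmin i hi.1 (by omega)
    rw [this]
    simp [Nat.cast_sub hs1]
  have htail0 : 0 ≤ ∑ i ∈ Finset.Icc s m, x i := by
    apply Finset.sum_nonneg
    intro i hi
    rw [Finset.mem_Icc] at hi
    exact hx0 i (by omega) hi.2
  have hsp : s ≤ p + 1 := by
    have : (s : ℝ) ≤ p + 1 := by linarith
    exact_mod_cast this
  obtain ⟨a, rfl⟩ : ∃ a, s = r + a + 1 := ⟨s - r - 1, by omega⟩
  have ha1 : 1 ≤ a := by omega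
  have han : a ≤ n := by omega
  have hnp : (n : ℝ) + r = p := by
    have : n + r = p := by omega
    exact_mod_cast this
  set K1 := (Finset.Icc 1 (a - 1)).filter (fun k => r + a + 1 ≤ q k) with hK1
  set K2 := Finset.Icc a n with hK2
  have hdisj : Disjoint K1 K2 := by
    rw [Finset.disjoint_left]; intro i
    simp only [hK1, hK2, Finset.mem_filter, Finset.mem_Icc]; omega
  have hmem1 : ∀ k ∈ K1, 1 ≤ k ∧ k < a ∧ r + a + 1 ≤ q k ∧ q k ≤ m := by
    intro k hk
    simp only [hK1, Finset.mem_filter, Finset.mem_Icc] at hk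
    have := hqrange k (by omega) (by omega)
    omega
  have hmem2 : ∀ k ∈ K2, a ≤ k ∧ k ≤ n ∧ r + a + 1 ≤ q k ∧ q k ≤ m := by
    intro k hk
    simp only [hK2, Finset.mem_Icc] at hk
    have := hqrange k (by omega) (by omega)
    omega
  have hmemU : ∀ k ∈ K1 ∪ K2, 1 ≤ k ∧ k ≤ n ∧ r + a + 1 ≤ q k ∧ q k ≤ m := by
    intro k hk
    rcases Finset.mem_union.1 hk with hk | hk
    · have := hmem1 k hk; omega
    · have := hmem2 k hk; omega
  have hφa : h (r + 1) - h (r + a + 1) ≤ ∑ k ∈ K1, φ k + φ a := by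
    rcases Nat.eq_or_lt_of_le ha1 with e | e
    · have : K1 = ∅ := by
        rw [Finset.eq_empty_iff_forall_notMem]
        intro k hk
        have := hmem1 k hk
        omega
      rw [this, ← e, hφ1 (by omega)]
      simp
    · have h1 := hφrec a e han
      have h2 := le_max_right (φ (a - 1)) (h (r + 1) - h (r + a + 1) - ∑ k ∈ K1, φ k)
      rw [← h1] at h2
      linarith
  have hones : ∑ k ∈ K1, x (q k) + ∑ k ∈ K2, x (q k) ≤ (n : ℝ) - a := by
    rw [← Finset.sum_union hdisj]
    have hinj : Set.InjOn q (K1 ∪ K2 : Finset ℕ) := by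
      intro i hi j hj hij
      have h1 := hmemU i hi
      have h2 := hmemU j hj
      exact hqinj i j h1.1 h1.2.1 h2.1 h2.2.1 hij
    rw [← Finset.sum_image (f := x) hinj]
    have : ∑ i ∈ (K1 ∪ K2).image q, x i ≤ ∑ i ∈ Finset.Icc (r + a + 1) m, x i := by
      apply Finset.sum_le_sum_of_subset_of_nonneg
      · intro i hi
        obtain ⟨k, hk, rfl⟩ := Finset.mem_image.1 hi
        have := hmemU k hk
        rw [Finset.mem_Icc]; omega
      · intro i hi _
        rw [Finset.mem_Icc] at hi
        exact hx0 i (by omega) hi.2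
    push_cast at hsplit
    linarith
  have hL : ∑ k ∈ K1, φ k * (1 - x (q k)) + ∑ k ∈ K2, φ k * (1 - x (q k))
      ≤ ∑ k ∈ Finset.Icc 1 n, φ k * (1 - x (q k)) := by
    rw [← Finset.sum_union hdisj]
    apply Finset.sum_le_sum_of_subset_of_nonneg
    · intro k hk
      have := hmemU k hk
      rw [Finset.mem_Icc]; omega
    · intro i hi _
      exact hterm i hi
  have h1 : ∑ k ∈ K1, φ k - φ a * ∑ k ∈ K1, x (q k) ≤ ∑ k ∈ K1, φ k * (1 - x (q k)) := by
    rw [Finset.mul_sum, ← Finset.sum_sub_distrib]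
    apply Finset.sum_le_sum
    intro k hk
    have b := hmem1 k hk
    have := hφmono k a b.1 b.2.1.le han
    have := mul_le_mul_of_nonneg_right this (hx0 (q k) (by omega) b.2.2.2)
    linarith
  have h2 : φ a * ((n : ℝ) - a + 1) - φ a * ∑ k ∈ K2, x (q k)
      ≤ ∑ k ∈ K2, φ k * (1 - x (q k)) := by
    have hc : (n : ℝ) - a + 1 = ∑ k ∈ K2, (1 : ℝ) := by
      simp only [hK2, Finset.sum_const, Nat.card_Icc, nsmul_eq_mul, mul_one]
      rw [Nat.cast_sub (by omega)]
      push_cast; ring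
    rw [hc, Finset.mul_sum, Finset.mul_sum, ← Finset.sum_sub_distrib]
    apply Finset.sum_le_sum
    intro k hk
    have b := hmem2 k hk
    have := hφmono a k ha1 b.1 b.2.1
    have := mul_le_mul_of_nonneg_right this (sub_nonneg.2 (hx1 (q k) (by omega) b.2.2.2))
    linarith
  have h3 := mul_le_mul_of_nonneg_left hones (hφ0 a ha1 han)
  linarith
end

section
/- Under Assumption 1, let Q be the set of points (x, y, u^1, …, u^m) ∈ ℝ^n × ℝ^m × (ℝ^n)^m satisfying: (b^k)^⊤(x − Σ_{j=1}^m u^j) ≥ d_k (1 − Σ_{j=1}^m y_j) for all k ∈ K; (A^k_{j·} + (b^k)^⊤) u^j ≥ (d_k − c^k_j) y_j for all k ∈ K and j ∈ {1,…,m}; E(x − Σ_{j=1}^m u^j) ≥ f (1 − Σ_{j=1}^m y_j); E u^j ≥ f y_j for all j ∈ {1,…,m}; x − Σ_{j=1}^m u^j ≥ 0; u^j ≥ 0 for all j; 1 − Σ_{j=1}^m y_j ≥ 0; and y ≥ 0. Then the projection of the convex hull of S onto the x-variables equals the projection of Q onto the x-variables: proj_x conv(S) = proj_x Q. -/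
noncomputable section

/-- The unit vectors `e^0 = 0, e^1, …, e^m` of `ℝ^m`, indexed by `Option (Fin m)`
(`none` corresponds to the origin `e^0`). -/
def unitVec (m : ℕ) : Option (Fin m) → (Fin m → ℝ)
  | none => 0
  | some j => Pi.single j 1

/-- The recession cone of a set `C`:
`rec(C) = {v : c + t • v ∈ C for all c ∈ C and all t ≥ 0}`. -/
def recCone {V : Type*} [AddCommMonoid V] [SMul ℝ V] (C : Set V) : Set V :=
  {v | ∀ c ∈ C, ∀ s : ℝ, 0 ≤ s → c + s • v ∈ C}

/-- The bilinear set `S = {(x,y) ∈ Ξ × Δ_m : yᵀ A^k x + (b^k)ᵀ x + (c^k)ᵀ y ≥ d_k ∀k}`,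
where `Ξ = {x ≥ 0 : E x ≥ f}` and `Δ_m = {y ∈ ℤ^m : y ≥ 0, ∑ y_j ≤ 1}`. -/
def bilinearS (n m κ τ : ℕ) (A : Fin κ → Fin m → Fin n → ℝ) (b : Fin κ → Fin n → ℝ)
    (c : Fin κ → Fin m → ℝ) (d : Fin κ → ℝ) (E : Fin τ → Fin n → ℝ) (f : Fin τ → ℝ) :
    Set ((Fin n → ℝ) × (Fin m → ℝ)) :=
  {w | (∀ i, 0 ≤ w.1 i) ∧ (∀ s, f s ≤ ∑ i, E s i * w.1 i) ∧
    (∀ j, ∃ zz : ℤ, w.2 j = (zz : ℝ)) ∧ (∀ j, 0 ≤ w.2 j) ∧ (∑ j, w.2 j ≤ 1) ∧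
    (∀ k, d k ≤ (∑ j, ∑ i, w.2 j * A k j i * w.1 i) + (∑ i, b k i * w.1 i) +
      (∑ j, c k j * w.2 j))}

/-- The restriction `S(e^j)` of the bilinear set at the point `y = e^j`. -/
def restrictS (n m κ τ : ℕ) (A : Fin κ → Fin m → Fin n → ℝ) (b : Fin κ → Fin n → ℝ)
    (c : Fin κ → Fin m → ℝ) (d : Fin κ → ℝ) (E : Fin τ → Fin n → ℝ) (f : Fin τ → ℝ)
    (o : Option (Fin m)) : Set ((Fin n → ℝ) × (Fin m → ℝ)) :=
  {w | w.2 = unitVec m o ∧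
    (∀ k, d k - (∑ j, c k j * unitVec m o j) ≤
      (∑ j, ∑ i, unitVec m o j * A k j i * w.1 i) + (∑ i, b k i * w.1 i)) ∧
    (∀ s, f s ≤ ∑ i, E s i * w.1 i) ∧ (∀ i, 0 ≤ w.1 i)}

/-- The disjunctive-programming set `Q` in the variables `(x, y, u¹, …, uᵐ)`. -/
def setQ (n m κ τ : ℕ) (A : Fin κ → Fin m → Fin n → ℝ) (b : Fin κ → Fin n → ℝ)
    (c : Fin κ → Fin m → ℝ) (d : Fin κ → ℝ) (E : Fin τ → Fin n → ℝ) (f : Fin τ → ℝ) :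
    Set ((Fin n → ℝ) × (Fin m → ℝ) × (Fin m → Fin n → ℝ)) :=
  {w | (∀ k, d k * (1 - ∑ j, w.2.1 j) ≤ ∑ i, b k i * (w.1 i - ∑ j, w.2.2 j i)) ∧
    (∀ k, ∀ j, (d k - c k j) * w.2.1 j ≤ ∑ i, (A k j i + b k i) * w.2.2 j i) ∧
    (∀ s, f s * (1 - ∑ j, w.2.1 j) ≤ ∑ i, E s i * (w.1 i - ∑ j, w.2.2 j i)) ∧
    (∀ s, ∀ j, f s * w.2.1 j ≤ ∑ i, E s i * w.2.2 j i) ∧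
    (∀ i, 0 ≤ w.1 i - ∑ j, w.2.2 j i) ∧
    (∀ j, ∀ i, 0 ≤ w.2.2 j i) ∧
    (0 ≤ 1 - ∑ j, w.2.1 j) ∧ (∀ j, 0 ≤ w.2.1 j)}

section helpers

def gG {n m κ : ℕ} (A : Fin κ → Fin m → Fin n → ℝ) (b : Fin κ → Fin n → ℝ) :
    Option (Fin m) → Fin κ → Fin n → ℝ
  | none => fun k => b k
  | some j => fun k => A k j + b k

def gR {m κ : ℕ} (c : Fin κ → Fin m → ℝ) (d : Fin κ → ℝ) :
    Option (Fin m) → Fin κ → ℝ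
  | none => fun k => d k
  | some j => fun k => d k - c k j

def PP {n m κ τ : ℕ} (A : Fin κ → Fin m → Fin n → ℝ) (b : Fin κ → Fin n → ℝ)
    (c : Fin κ → Fin m → ℝ) (d : Fin κ → ℝ) (E : Fin τ → Fin n → ℝ) (f : Fin τ → ℝ)
    (o : Option (Fin m)) (v : Fin n → ℝ) (t : ℝ) : Prop :=
  (∀ k, gR c d o k * t ≤ gG A b o k ⬝ᵥ v) ∧ (∀ s, f s * t ≤ E s ⬝ᵥ v) ∧ ∀ i, 0 ≤ v i

variable {n m κ τ : ℕ} {A : Fin κ → Fin m → Fin n → ℝ} {b : Fin κ → Fin n → ℝ}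
    {c : Fin κ → Fin m → ℝ} {d : Fin κ → ℝ} {E : Fin τ → Fin n → ℝ} {f : Fin τ → ℝ}

theorem PP.add {o : Option (Fin m)} {v w : Fin n → ℝ} {t r : ℝ}
    (h : PP A b c d E f o v t) (h' : PP A b c d E f o w r) :
    PP A b c d E f o (v + w) (t + r) := by
  refine ⟨fun k => ?_, fun s => ?_, fun i => add_nonneg (h.2.2 i) (h'.2.2 i)⟩
  · rw [dotProduct_add, mul_add]; exact add_le_add (h.1 k) (h'.1 k)
  · rw [dotProduct_add, mul_add]; exact add_le_add (h.2.1 s) (h'.2.1 s)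

theorem PP.smul {o : Option (Fin m)} {v : Fin n → ℝ} {t : ℝ}
    (h : PP A b c d E f o v t) {a : ℝ} (ha : 0 ≤ a) :
    PP A b c d E f o (a • v) (a * t) := by
  refine ⟨fun k => ?_, fun s => ?_, fun i => mul_nonneg ha (h.2.2 i)⟩
  · rw [dotProduct_smul, smul_eq_mul, mul_left_comm]
    exact mul_le_mul_of_nonneg_left (h.1 k) ha
  · rw [dotProduct_smul, smul_eq_mul, mul_left_comm]
    exact mul_le_mul_of_nonneg_left (h.2.1 s) ha

theorem PP.zero (o : Option (Fin m)) : PP A b c d E f o 0 0 := by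
  refine ⟨fun k => ?_, fun s => ?_, fun i => le_rfl⟩ <;> simp

theorem PP.sum {o : Option (Fin m)} {ι : Type} (F : Finset ι) (V : ι → Fin n → ℝ)
    (h : ∀ p ∈ F, PP A b c d E f o (V p) 0) :
    PP A b c d E f o (∑ p ∈ F, V p) 0 := by
  classical
  induction F using Finset.induction_on with
  | empty => simpa using PP.zero o
  | insert a s ha ih =>
    rw [Finset.sum_insert ha]
    have := (h a (by simp)).add (ih fun p hp => h p (by simp [hp]))
    simpa using this

theorem mem_restrictS (o : Option (Fin m)) (w : (Fin n → ℝ) × (Fin m → ℝ)) :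
    w ∈ restrictS n m κ τ A b c d E f o ↔ w.2 = unitVec m o ∧ PP A b c d E f o w.1 1 := by
  cases o with
  | none => simp [restrictS, PP, unitVec, gG, gR, dotProduct]
  | some j =>
    have h1 : ∀ k, ∑ x, (Pi.single j 1 : Fin m → ℝ) x * (∑ i, A k x i * w.1 i)
        = ∑ i, A k j i * w.1 i := by
      intro k; simp [Pi.single_apply]
    simp only [restrictS, PP, unitVec, gG, gR, dotProduct, Set.mem_setOf_eq, mul_assoc,
      ← Finset.mul_sum, h1]
    simp [Pi.single_apply, add_mul, Finset.sum_add_distrib]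

theorem int_unit {y : Fin m → ℝ} (h1 : ∀ j, ∃ zz : ℤ, y j = (zz : ℝ)) (h2 : ∀ j, 0 ≤ y j)
    (h3 : ∑ j, y j ≤ 1) : ∃ o, y = unitVec m o := by
  classical
  by_cases h : ∃ j, y j ≠ 0
  · obtain ⟨j, hj⟩ := h
    have hj1 : 1 ≤ y j := by
      obtain ⟨z, hz⟩ := h1 j
      have hp : 0 < y j := lt_of_le_of_ne (h2 j) (Ne.symm hj)
      rw [hz] at hp ⊢
      exact_mod_cast hp
    have hs := Finset.add_sum_erase Finset.univ y (Finset.mem_univ j)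
    have hnn : 0 ≤ ∑ x ∈ Finset.univ.erase j, y x := Finset.sum_nonneg fun i _ => h2 i
    have h0 : ∑ x ∈ Finset.univ.erase j, y x = 0 := by linarith
    rw [Finset.sum_eq_zero_iff_of_nonneg fun i _ => h2 i] at h0
    refine ⟨some j, ?_⟩
    funext i
    by_cases hi : i = j
    · subst hi; simp [unitVec]; linarith
    · simp [unitVec, hi]; exact h0 i (by simp [hi])
  · push Not at h
    exact ⟨none, funext h⟩

theorem mem_bilinearS (w : (Fin n → ℝ) × (Fin m → ℝ)) :
    w ∈ bilinearS n m κ τ A b c d E f ↔ ∃ o, w ∈ restrictS n m κ τ A b c d E f o := by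
  constructor
  · rintro ⟨h1, h2, h3, h4, h5, h6⟩
    obtain ⟨o, ho⟩ := int_unit h3 h4 h5
    refine ⟨o, ho, fun k => ?_, h2, h1⟩
    have := h6 k
    rw [ho] at this
    linarith
  · rintro ⟨o, ho, h1, h2, h3⟩
    refine ⟨h3, h2, ?_, ?_, ?_, fun k => ?_⟩
    · intro j; rw [ho]
      cases o with
      | none => exact ⟨0, by simp [unitVec]⟩
      | some l =>
        by_cases h : j = l
        · exact ⟨1, by simp [unitVec, h]⟩
        · exact ⟨0, by simp [unitVec, h]⟩
    · intro j; rw [ho]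
      cases o with
      | none => simp [unitVec]
      | some l =>
        by_cases h : j = l
        · simp [unitVec, h]
        · simp [unitVec, h]
    · rw [ho]
      cases o with
      | none => simp [unitVec]
      | some l => simp [unitVec]
    · have := h1 k
      rw [ho]
      linarith

theorem mem_projQ (x : Fin n → ℝ) :
    x ∈ Prod.fst '' (setQ n m κ τ A b c d E f) ↔
      ∃ (V : Option (Fin m) → Fin n → ℝ) (T : Option (Fin m) → ℝ),
        ∑ o, V o = x ∧ ∑ o, T o = 1 ∧ (∀ o, 0 ≤ T o) ∧ ∀ o, PP A b c d E f o (V o) (T o) := by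
  constructor
  · rintro ⟨⟨x', y, u⟩, ⟨h1, h2, h3, h4, h5, h6, h7, h8⟩, rfl⟩
    refine ⟨fun o => o.elim (x' - ∑ j, u j) u, fun o => o.elim (1 - ∑ j, y j) y, ?_, ?_, ?_, ?_⟩
    · simp [Fintype.sum_option]
    · simp [Fintype.sum_option]
    · rintro (_ | j)
      · exact h7
      · exact h8 j
    · rintro (_ | j)
      · refine ⟨fun k => ?_, fun s => ?_, fun i => ?_⟩
        · simpa [gR, gG, dotProduct] using h1 k
        · simpa [gR, gG, dotProduct] using h3 s
        · simpa using h5 i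
      · exact ⟨fun k => h2 k j, fun s => h4 s j, h6 j⟩
  · rintro ⟨V, T, rfl, hT, hT0, hP⟩
    rw [Fintype.sum_option] at hT
    have e1 : 1 - ∑ j, T (some j) = T none := by linarith
    have e2 : ∀ i, (∑ o, V o) i - ∑ j, V (some j) i = V none i := by
      intro i; simp [Fintype.sum_option]
    refine ⟨⟨∑ o, V o, fun j => T (some j), fun j => V (some j)⟩, ?_, rfl⟩
    simp only [setQ, Set.mem_setOf_eq, e1, e2]
    exact ⟨(hP none).1, fun k j => (hP (some j)).1 k, (hP none).2.1,
      fun s j => (hP (some j)).2.1 s, (hP none).2.2, fun j => (hP (some j)).2.2, hT0 none,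
      fun j => hT0 _⟩

theorem nonneg_of_line {p q r : ℝ} (h : ∀ s : ℝ, 0 ≤ s → r ≤ p + s * q) : 0 ≤ q := by
  by_contra hq
  push Not at hq
  have h0 := h 0 le_rfl
  have h1 := h ((p - r + 1) / (-q)) (div_nonneg (by linarith) (by linarith))
  have : (p - r + 1) / (-q) * q = -(p - r + 1) := by
    have : q ≠ 0 := hq.ne
    field_simp
  linarith

theorem PP.transfer (hne : ∀ o : Option (Fin m), (restrictS n m κ τ A b c d E f o).Nonempty)
    (hrec : ∀ o o' : Option (Fin m),
      recCone (restrictS n m κ τ A b c d E f o)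
        = recCone (restrictS n m κ τ A b c d E f o'))
    {o o' : Option (Fin m)} {v : Fin n → ℝ} (h : PP A b c d E f o v 0) :
    PP A b c d E f o' v 0 := by
  have hv : ((v, 0) : (Fin n → ℝ) × (Fin m → ℝ)) ∈ recCone (restrictS n m κ τ A b c d E f o) := by
    intro w hw s hs
    rw [mem_restrictS] at hw ⊢
    refine ⟨by simpa using hw.1, ?_⟩
    simpa using hw.2.add (h.smul hs)
  rw [hrec o o'] at hv
  obtain ⟨w, hw⟩ := hne o'
  have key : ∀ s : ℝ, 0 ≤ s → PP A b c d E f o' (w.1 + s • v) 1 := by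
    intro s hs
    have := hv w hw s hs
    rw [mem_restrictS] at this
    exact this.2
  refine ⟨fun k => ?_, fun k => ?_, h.2.2⟩
  · rw [mul_zero]
    refine nonneg_of_line (p := gG A b o' k ⬝ᵥ w.1) (r := gR c d o' k * 1) fun s hs => ?_
    simpa [dotProduct_add, dotProduct_smul] using (key s hs).1 k
  · exact h.2.1 k

end helpers

/-- **Proposition (disjunctive-programming reformulation).** Under Assumption 1
(each restriction `S(e^j)` is nonempty and all share the same recession cone),
the projection of `conv(S)` onto the `x`-variables equals the projection of `Q`
onto the `x`-variables. -/
theorem proj_convexHull_eq_proj_setQ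
    (n m κ τ : ℕ) (hn : 0 < n) (hm : 0 < m) (hκ : 0 < κ) (hτ : 0 < τ)
    (A : Fin κ → Fin m → Fin n → ℝ) (b : Fin κ → Fin n → ℝ)
    (c : Fin κ → Fin m → ℝ) (d : Fin κ → ℝ) (E : Fin τ → Fin n → ℝ) (f : Fin τ → ℝ)
    (hne : ∀ o : Option (Fin m), (restrictS n m κ τ A b c d E f o).Nonempty)
    (hrec : ∀ o o' : Option (Fin m),
      recCone (restrictS n m κ τ A b c d E f o)
        = recCone (restrictS n m κ τ A b c d E f o')) :
    Prod.fst '' (convexHull ℝ (bilinearS n m κ τ A b c d E f))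
      = Prod.fst '' (setQ n m κ τ A b c d E f) := by
  classical
  apply Set.Subset.antisymm
  · have e : Prod.fst '' (convexHull ℝ (bilinearS n m κ τ A b c d E f))
        = convexHull ℝ (Prod.fst '' (bilinearS n m κ τ A b c d E f)) :=
      (LinearMap.fst ℝ (Fin n → ℝ) (Fin m → ℝ)).image_convexHull _
    rw [e]
    apply convexHull_min
    · rintro _ ⟨w, hw, rfl⟩
      obtain ⟨o, ho⟩ := (mem_bilinearS w).1 hw
      rw [mem_restrictS] at ho
      rw [mem_projQ]
      refine ⟨Pi.single o w.1, Pi.single o 1, by simp, by simp, ?_, ?_⟩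
      · intro p
        by_cases h : p = o
        · subst h; simp
        · simp [h]
      · intro p
        by_cases h : p = o
        · subst h; simpa using ho.2
        · simpa [h] using PP.zero p
    · intro x hx y hy a a' ha ha' haa
      rw [mem_projQ] at hx hy ⊢
      obtain ⟨V, T, rfl, h1, h2, h3⟩ := hx
      obtain ⟨V', T', rfl, h1', h2', h3'⟩ := hy
      refine ⟨fun o => a • V o + a' • V' o, fun o => a * T o + a' * T' o, ?_, ?_, ?_, ?_⟩
      · rw [Finset.sum_add_distrib, Finset.smul_sum, Finset.smul_sum]
      · rw [Finset.sum_add_distrib, ← Finset.mul_sum, ← Finset.mul_sum, h1, h1']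
        linarith
      · exact fun o => add_nonneg (mul_nonneg ha (h2 o)) (mul_nonneg ha' (h2' o))
      · exact fun o => ((h3 o).smul ha).add ((h3' o).smul ha')
  · intro x hx
    rw [mem_projQ] at hx
    obtain ⟨V, T, rfl, h1, h2, h3⟩ := hx
    choose p hp using hne
    set W : Fin n → ℝ := ∑ o ∈ Finset.univ.filter (fun o => T o = 0), V o with hW
    have hWP : ∀ o, PP A b c d E f o W 0 := by
      intro o
      apply PP.sum
      intro q hq
      have hq0 : T q = 0 := by simpa using hq
      have := h3 q
      rw [hq0] at this
      exact this.transfer (fun o => ⟨p o, hp o⟩) hrec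
    let z : Option (Fin m) → (Fin n → ℝ) × (Fin m → ℝ) := fun o =>
      if T o = 0 then p o else ((T o)⁻¹ • V o + W, unitVec m o)
    have hz : ∀ o, z o ∈ bilinearS n m κ τ A b c d E f := by
      intro o
      rw [mem_bilinearS]
      refine ⟨o, ?_⟩
      by_cases h : T o = 0
      · simpa [z, h] using hp o
      · simp only [z, h, if_false]
        rw [mem_restrictS]
        refine ⟨rfl, ?_⟩
        have := ((h3 o).smul (inv_nonneg.2 (h2 o))).add (hWP o)
        simpa [inv_mul_cancel₀ h] using this
    refine ⟨∑ o, T o • z o, ?_, ?_⟩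
    · exact (convex_convexHull ℝ _).sum_mem (fun o _ => h2 o) h1
        fun o _ => subset_convexHull ℝ _ (hz o)
    · rw [Prod.fst_sum]
      have : ∀ o, (T o • z o).1 = (V o - if T o = 0 then V o else 0) + T o • W := by
        intro o
        by_cases h : T o = 0
        · simp [h]
        · simp [z, h, smul_smul, mul_inv_cancel₀ h]
      simp only [this]
      rw [Finset.sum_add_distrib, Finset.sum_sub_distrib, ← Finset.sum_smul, h1,
        ← Finset.sum_filter, ← hW]
      simp

end
end

section
/- Let nonnegative multipliers α^j ∈ ℝ^κ_{≥0}, β^j ∈ ℝ^τ_{≥0}, γ^j ∈ ℝ^n_{≥0}, θ_j ∈ ℝ_{≥0} for j ∈ {0,1,…,m} satisfy: for all i ∈ {1,…,n} and j ∈ {1,…,m}, Σ_{k=1}^{κ} ((A^k_{j,i} + b^k_i) α^j_k − b^k_i α^0_k) + Σ_{t=1}^{τ} (E_{t,i} β^j_t − E_{t,i} β^0_t) + γ^j_i − γ^0_i = 0; and for all j ∈ {1,…,m}, Σ_{k=1}^{κ} ((c^k_j − d_k) α^j_k + d_k α^0_k) + Σ_{t=1}^{τ} (−f_t β^j_t +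 f_t β^0_t) + θ_j − θ_0 = 0. Then every (x,y) ∈ S satisfies (Σ_{k=1}^{κ} α^0_k b^k + E^⊤ β^0 + γ^0)^⊤ x ≥ Σ_{k=1}^{κ} α^0_k d_k + (β^0)^⊤ f − θ_0; equivalently, this linear inequality in x is valid for the projection of conv(S) onto the x-variables. -/
theorem agg_aux {n κ τ : ℕ} (B : Fin κ → Fin n → ℝ) (D : Fin κ → ℝ)
    (E : Fin τ → Fin n → ℝ) (f : Fin τ → ℝ)
    (α : Fin κ → ℝ) (β : Fin τ → ℝ) (γ : Fin n → ℝ) (θ : ℝ)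
    (hα : ∀ k, 0 ≤ α k) (hβ : ∀ s, 0 ≤ β s) (hγ : ∀ i, 0 ≤ γ i) (hθ : 0 ≤ θ)
    (x : Fin n → ℝ) (hx0 : ∀ i, 0 ≤ x i) (hEx : ∀ s, f s ≤ ∑ i, E s i * x i)
    (hB : ∀ k, D k ≤ ∑ i, B k i * x i) :
    (∑ k, α k * D k) + (∑ s, β s * f s) - θ ≤
      ∑ i, ((∑ k, α k * B k i) + (∑ s, E s i * β s) + γ i) * x i := by
  have e : ∑ i, ((∑ k, α k * B k i) + (∑ s, E s i * β s) + γ i) * x i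
      = (∑ k, α k * ∑ i, B k i * x i) + (∑ s, β s * ∑ i, E s i * x i) + ∑ i, γ i * x i := by
    simp only [add_mul, Finset.sum_add_distrib, Finset.sum_mul, Finset.mul_sum]
    congr 2
    · rw [Finset.sum_comm]
      exact Finset.sum_congr rfl fun _ _ => Finset.sum_congr rfl fun _ _ => by ring
    · rw [Finset.sum_comm]
      exact Finset.sum_congr rfl fun _ _ => Finset.sum_congr rfl fun _ _ => by ring
  rw [e]
  have h1 := Finset.sum_le_sum fun k (_ : k ∈ Finset.univ) =>
    mul_le_mul_of_nonneg_left (hB k) (hα k)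
  have h2 := Finset.sum_le_sum fun k (_ : k ∈ Finset.univ) =>
    mul_le_mul_of_nonneg_left (hEx k) (hβ k)
  have h3 : 0 ≤ ∑ i, γ i * x i := Finset.sum_nonneg fun i _ => mul_nonneg (hγ i) (hx0 i)
  linarith

/-- **Validity of aggregated (projection-cone) inequalities for the bilinear set `S`.**
If nonnegative multipliers `α^j, β^j, γ^j, θ_j` (`j ∈ {0,1,…,m}`, encoded via
`Option (Fin m)` with `none` playing the role of `j = 0`) satisfy the projection-cone
equations, then every `(x,y) ∈ S` satisfies
`(∑_k α⁰_k b^k + Eᵀ β⁰ + γ⁰)ᵀ x ≥ ∑_k α⁰_k d_k + (β⁰)ᵀ f − θ₀`. -/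
theorem aggregated_inequality_valid
    (n m κ τ : ℕ) (hn : 0 < n) (hm : 0 < m) (hκ : 0 < κ) (hτ : 0 < τ)
    (A : Fin κ → Fin m → Fin n → ℝ) (b : Fin κ → Fin n → ℝ)
    (c : Fin κ → Fin m → ℝ) (d : Fin κ → ℝ) (E : Fin τ → Fin n → ℝ) (f : Fin τ → ℝ)
    (α : Option (Fin m) → Fin κ → ℝ) (β : Option (Fin m) → Fin τ → ℝ)
    (γ : Option (Fin m) → Fin n → ℝ) (θ : Option (Fin m) → ℝ)
    (hα : ∀ j k, 0 ≤ α j k) (hβ : ∀ j s, 0 ≤ β j s)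
    (hγ : ∀ j i, 0 ≤ γ j i) (hθ : ∀ j, 0 ≤ θ j)
    (heq1 : ∀ (i : Fin n) (j : Fin m),
      (∑ k, ((A k j i + b k i) * α (some j) k - b k i * α none k))
        + (∑ s, (E s i * β (some j) s - E s i * β none s))
        + γ (some j) i - γ none i = 0)
    (heq2 : ∀ j : Fin m,
      (∑ k, ((c k j - d k) * α (some j) k + d k * α none k))
        + (∑ s, (- f s * β (some j) s + f s * β none s))
        + θ (some j) - θ none = 0)
    (x : Fin n → ℝ) (y : Fin m → ℝ)
    (hx0 : ∀ i, 0 ≤ x i)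
    (hEx : ∀ s, f s ≤ ∑ i, E s i * x i)
    (hyint : ∀ j, ∃ zz : ℤ, y j = (zz : ℝ))
    (hy0 : ∀ j, 0 ≤ y j) (hy1 : ∑ j, y j ≤ 1)
    (hbil : ∀ k, d k ≤ (∑ j, ∑ i, y j * A k j i * x i) + (∑ i, b k i * x i)
      + (∑ j, c k j * y j)) :
    (∑ k, α none k * d k) + (∑ s, β none s * f s) - θ none ≤
      ∑ i, ((∑ k, α none k * b k i) + (∑ s, E s i * β none s) + γ none i) * x i := by
  by_cases hz : ∀ j, y j = 0
  · refine agg_aux b d E f (α none) (β none) (γ none) (θ none) (hα _) (hβ _) (hγ _) (hθ _)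
      x hx0 hEx fun k => ?_
    simpa [hz] using hbil k
  · push Not at hz
    obtain ⟨j, hj⟩ := hz
    have hj1 : 1 ≤ y j := by
      obtain ⟨z, hzz⟩ := hyint j
      have h0 := hy0 j
      rw [hzz] at h0 hj ⊢
      have h0' : 0 ≤ z := by exact_mod_cast h0
      have hj' : z ≠ 0 := by exact_mod_cast hj
      have : 1 ≤ z := by omega
      exact_mod_cast this
    have hsplit := Finset.add_sum_erase Finset.univ y (Finset.mem_univ j)
    have hnn : ∀ l ∈ Finset.univ.erase j, 0 ≤ y l := fun l _ => hy0 l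
    have hs0 := Finset.sum_nonneg hnn
    have hyj : y j = 1 := by linarith
    have hsz : ∑ l ∈ Finset.univ.erase j, y l = 0 := by linarith
    have hoth : ∀ l, l ≠ j → y l = 0 := fun l hl =>
      (Finset.sum_eq_zero_iff_of_nonneg hnn).1 hsz l (by simp [hl])
    have key := agg_aux (fun k i => A k j i + b k i) (fun k => d k - c k j) E f
      (α (some j)) (β (some j)) (γ (some j)) (θ (some j)) (hα _) (hβ _) (hγ _) (hθ _)
      x hx0 hEx (fun k => by
        have h := hbil k
        rw [Finset.sum_eq_single j (fun l _ hl => by simp [hoth l hl]) (by simp),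
          Finset.sum_eq_single (f := fun l => c k l * y l) j
            (fun l _ hl => by simp [hoth l hl]) (by simp)] at h
        simp only [hyj, one_mul, mul_one] at h
        simp only [add_mul, Finset.sum_add_distrib]
        linarith)
    have e2 := heq2 j
    have e1 : ∀ i, ((∑ k, α none k * b k i) + (∑ s, E s i * β none s) + γ none i)
        = (∑ k, α (some j) k * (A k j i + b k i)) + (∑ s, E s i * β (some j) s)
          + γ (some j) i := by
      intro i
      have := heq1 i j
      simp only [Finset.sum_sub_distrib] at this
      simp only [mul_comm (α _ _)]
      linarith
    simp only [e1]
    refine le_trans (le_of_eq ?_) key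
    simp only [Finset.sum_add_distrib, neg_mul, Finset.sum_neg_distrib, sub_mul,
      Finset.sum_sub_distrib] at e2
    simp only [mul_comm (α _ _), mul_comm (β _ _), sub_mul, Finset.sum_sub_distrib]
    linarith
end

section
/- Fix k̂ ∈ K and ĵ ∈ {0,1,…,m}, and let C_{(k̂,ĵ)} be the polyhedron of all nonnegative multiplier vectors π = (α^0,…,α^m; β^0,…,β^m; γ^0,…,γ^m; θ_0,…,θ_m) with α^j ∈ ℝ^κ_{≥0}, β^j ∈ ℝ^τ_{≥0}, γ^j ∈ ℝ^n_{≥0}, θ_j ∈ ℝ_{≥0}, satisfying α^{ĵ}_{k̂} = 1 together with: for all i ∈ {1,…,n} and j ∈ {1,…,m}, Σ_{k=1}^{κ} ((A^k_{j,i} + b^k_i) α^j_k − b^k_i α^0_k) + Σ_{t=1}^{τ} (E_{t,i} β^j_t − E_{t,i} β^0_t) + γ^j_i − γ^0_i = 0; and for all j ∈ {1,…,m}, Σ_{k=1}^{κ} ((c^k_j − d_k) α^j_k + d_k α^0_k) + Σ_{t=1}^{τ} (−f_t β^j_t + f_t β^0_t) + θ_j − θ_0 = 0. If π̄ is an extreme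 point of C_{(k̂,ĵ)}, then for every i ∈ {1,…,n} there exists some j ∈ {0,1,…,m} with γ̄^j_i = 0 (that is, min_{j∈{0,…,m}} γ̄^j_i = 0), and there exists some j ∈ {0,1,…,m} with θ̄_j = 0 (that is, min_{j∈{0,…,m}} θ̄_j = 0). -/
/-- The projection cone `C_{(k̂,ĵ)}` of nonnegative multipliers
`(α^0,…,α^m; β^0,…,β^m; γ^0,…,γ^m; θ_0,…,θ_m)` (index `j = 0` encoded as `none`)
with `α^ĵ_k̂ = 1` and satisfying the projection-cone equations. -/
def projCone (n m κ τ : ℕ) (A : Fin κ → Fin m → Fin n → ℝ) (b : Fin κ → Fin n → ℝ)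
    (c : Fin κ → Fin m → ℝ) (d : Fin κ → ℝ) (E : Fin τ → Fin n → ℝ) (f : Fin τ → ℝ)
    (khat : Fin κ) (jhat : Option (Fin m)) :
    Set ((Option (Fin m) → Fin κ → ℝ) × (Option (Fin m) → Fin τ → ℝ) ×
      (Option (Fin m) → Fin n → ℝ) × (Option (Fin m) → ℝ)) :=
  {pt | (∀ j k, 0 ≤ pt.1 j k) ∧ (∀ j s, 0 ≤ pt.2.1 j s) ∧
    (∀ j i, 0 ≤ pt.2.2.1 j i) ∧ (∀ j, 0 ≤ pt.2.2.2 j) ∧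
    pt.1 jhat khat = 1 ∧
    (∀ (i : Fin n) (j : Fin m),
      (∑ k, ((A k j i + b k i) * pt.1 (some j) k - b k i * pt.1 none k))
        + (∑ s, (E s i * pt.2.1 (some j) s - E s i * pt.2.1 none s))
        + pt.2.2.1 (some j) i - pt.2.2.1 none i = 0) ∧
    (∀ j : Fin m,
      (∑ k, ((c k j - d k) * pt.1 (some j) k + d k * pt.1 none k))
        + (∑ s, (- f s * pt.2.1 (some j) s + f s * pt.2.1 none s))
        + pt.2.2.2 (some j) - pt.2.2.2 none = 0)}

theorem shift_mem_aux {n m κ τ : ℕ} {A : Fin κ → Fin m → Fin n → ℝ} {b : Fin κ → Fin n → ℝ}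
    {c : Fin κ → Fin m → ℝ} {d : Fin κ → ℝ} {E : Fin τ → Fin n → ℝ} {f : Fin τ → ℝ}
    {khat : Fin κ} {jhat : Option (Fin m)}
    {pt : (Option (Fin m) → Fin κ → ℝ) × (Option (Fin m) → Fin τ → ℝ) ×
      (Option (Fin m) → Fin n → ℝ) × (Option (Fin m) → ℝ)}
    (h : pt ∈ projCone n m κ τ A b c d E f khat jhat) (g : Fin n → ℝ) (t : ℝ)
    (hg : ∀ j i, 0 ≤ pt.2.2.1 j i + g i) (ht : ∀ j, 0 ≤ pt.2.2.2 j + t) :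
    (pt.1, pt.2.1, (fun j i => pt.2.2.1 j i + g i), (fun j => pt.2.2.2 j + t)) ∈
      projCone n m κ τ A b c d E f khat jhat := by
  obtain ⟨h1, h2, h3, h4, h5, h6, h7⟩ := h
  refine ⟨h1, h2, hg, ht, h5, fun i j => ?_, fun j => ?_⟩
  · have := h6 i j
    dsimp only
    linarith
  · have := h7 j
    dsimp only
    linarith

theorem extreme_shift_aux {n m κ τ : ℕ} {A : Fin κ → Fin m → Fin n → ℝ} {b : Fin κ → Fin n → ℝ}
    {c : Fin κ → Fin m → ℝ} {d : Fin κ → ℝ} {E : Fin τ → Fin n → ℝ} {f : Fin τ → ℝ}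
    {khat : Fin κ} {jhat : Option (Fin m)}
    {pt : (Option (Fin m) → Fin κ → ℝ) × (Option (Fin m) → Fin τ → ℝ) ×
      (Option (Fin m) → Fin n → ℝ) × (Option (Fin m) → ℝ)}
    (h : pt ∈ (projCone n m κ τ A b c d E f khat jhat).extremePoints ℝ) (g : Fin n → ℝ) (t : ℝ)
    (hg0 : ∀ i, 0 ≤ g i) (ht0 : 0 ≤ t)
    (hg : ∀ j i, g i ≤ pt.2.2.1 j i) (ht : ∀ j, t ≤ pt.2.2.2 j) :
    (∀ i, g i = 0) ∧ t = 0 := by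
  have hm := h.1
  have p1 := shift_mem_aux hm g t (fun j i => by linarith [hg j i, hg0 i])
    (fun j => by linarith [ht j])
  have p2 := shift_mem_aux hm (fun i => - g i) (-t) (fun j i => by linarith [hg j i, hg0 i])
    (fun j => by linarith [ht j])
  have key := h.2 p1 p2 ⟨1/2, 1/2, by norm_num, by norm_num, by norm_num, by
    ext
    all_goals simp
    all_goals ring⟩
  constructor
  · intro i
    have := congrFun (congrFun (congrArg (fun q => q.2.2.1) key) none) i
    simpa using this
  · have := congrFun (congrArg (fun q => q.2.2.2) key) none
    simpa using this

/-- **At an extreme point of the projection cone `C_{(k̂,ĵ)}`, for every `i` some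
multiplier `γ^j_i` vanishes, and some multiplier `θ_j` vanishes.** -/
theorem extremePoint_projCone_gamma_theta_vanish
    (n m κ τ : ℕ) (hn : 0 < n) (hm : 0 < m) (hκ : 0 < κ) (hτ : 0 < τ)
    (A : Fin κ → Fin m → Fin n → ℝ) (b : Fin κ → Fin n → ℝ)
    (c : Fin κ → Fin m → ℝ) (d : Fin κ → ℝ) (E : Fin τ → Fin n → ℝ) (f : Fin τ → ℝ)
    (khat : Fin κ) (jhat : Option (Fin m)) :
    ∀ pt ∈ (projCone n m κ τ A b c d E f khat jhat).extremePoints ℝ,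
      (∀ i : Fin n, ∃ j : Option (Fin m), pt.2.2.1 j i = 0) ∧
      (∃ j : Option (Fin m), pt.2.2.2 j = 0) := by
  classical
  intro pt hpt
  obtain ⟨-, -, h3, h4, -⟩ := hpt.1
  constructor
  · intro i
    obtain ⟨j, hj⟩ := Finite.exists_min (fun j => pt.2.2.1 j i)
    refine ⟨j, ?_⟩
    have := (extreme_shift_aux hpt (fun i' => if i' = i then pt.2.2.1 j i else 0) 0
      (fun i' => by
        split_ifs
        exacts [h3 j i, le_rfl]) le_rfl
      (fun j' i' => by
        split_ifs with hi
        · subst hi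
          exact hj j'
        · exact h3 j' i') h4).1 i
    simpa using this
  · obtain ⟨j, hj⟩ := Finite.exists_min pt.2.2.2
    exact ⟨j, (extreme_shift_aux hpt (fun _ => 0) (pt.2.2.2 j) (fun _ => le_rfl) (h4 j) h3 hj).2⟩
end

section
/- Every (z,x) ∈ F_c lies in the projection of S_c onto the (z,x)-variables; that is, for every (z,x) ∈ F_c there exists y ∈ {0,1}^m with Σ_{j=1}^m y_j ≤ 1 such that (z,x,y) ∈ S_c. -/
/-- **The mixing set with a knapsack constraint is contained in the projection of the
bilinear set `S_c`.** For every `(z,x) ∈ F_c` there exists `y ∈ {0,1}^m` with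
`∑ y_j ≤ 1` such that `(z,x,y) ∈ S_c`, i.e., such that `0 ≤ x ≤ 1`,
`(1 − x_i)(1 − ∑_j y_j) = 0`, `z y_i ≥ h_i y_i`, `x_i y_i ≤ 0`, and
`(1 − x_i) y_j ≤ 0` for `i < j`. -/
theorem mixing_subset_proj_bilinear
    (m : ℕ) (hm : 1 ≤ m) (h : ℕ → ℝ)
    (hmono : ∀ i j : ℕ, 1 ≤ i → i ≤ j → j ≤ m → h j ≤ h i)
    (hnonneg : ∀ i : ℕ, 1 ≤ i → i ≤ m → 0 ≤ h i)
    (π : ℕ → ℝ) (hπpos : ∀ i : ℕ, 1 ≤ i → i ≤ m → 0 < π i)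
    (hπsum : ∑ i ∈ Finset.Icc 1 m, π i = 1)
    (ε : ℝ) (hε0 : 0 ≤ ε) (hε1 : ε ≤ 1)
    (hπε : ∀ i : ℕ, 1 ≤ i → i ≤ m → π i ≤ ε)
    (z : ℝ) (x : ℕ → ℝ) (hz : 0 ≤ z)
    (hxbin : ∀ i : ℕ, 1 ≤ i → i ≤ m → x i = 0 ∨ x i = 1)
    (hmix : ∀ i : ℕ, 1 ≤ i → i ≤ m → x i = 0 → h i ≤ z)
    (hknap : ∑ i ∈ Finset.Icc 1 m, π i * x i ≤ ε) :
    ∃ y : ℕ → ℝ,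
      (∀ j : ℕ, 1 ≤ j → j ≤ m → (y j = 0 ∨ y j = 1)) ∧
      (∑ j ∈ Finset.Icc 1 m, y j ≤ 1) ∧
      (∀ i : ℕ, 1 ≤ i → i ≤ m → 0 ≤ x i ∧ x i ≤ 1) ∧
      (∀ i : ℕ, 1 ≤ i → i ≤ m →
        (1 - x i) * (1 - ∑ j ∈ Finset.Icc 1 m, y j) = 0) ∧
      (∀ i : ℕ, 1 ≤ i → i ≤ m → h i * y i ≤ z * y i) ∧
      (∀ i : ℕ, 1 ≤ i → i ≤ m → x i * y i ≤ 0) ∧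
      (∀ i j : ℕ, 1 ≤ i → i < j → j ≤ m → (1 - x i) * y j ≤ 0) := by
  classical
  have hx01 : ∀ i : ℕ, 1 ≤ i → i ≤ m → 0 ≤ x i ∧ x i ≤ 1 := by
    intro i h1 h2
    rcases hxbin i h1 h2 with e | e <;> rw [e] <;> norm_num
  by_cases hex : ∃ k, 1 ≤ k ∧ k ≤ m ∧ x k = 0
  · obtain ⟨hk1, hkm, hk0⟩ := Nat.find_spec hex
    have hmin : ∀ i, i < Nat.find hex → 1 ≤ i → i ≤ m → x i = 1 := by
      intro i hi h1 h2
      rcases hxbin i h1 h2 with e | e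
      · exact absurd ⟨h1, h2, e⟩ (Nat.find_min hex hi)
      · exact e
    generalize Nat.find hex = k at *
    have hsum : ∑ j ∈ Finset.Icc 1 m, (if j = k then (1 : ℝ) else 0) = 1 := by
      rw [Finset.sum_ite_eq']
      simp [hk1, hkm]
    refine ⟨fun j => if j = k then 1 else 0, ?_, hsum.le, hx01, ?_, ?_, ?_, ?_⟩
    · intro j _ _
      by_cases e : j = k <;> simp [e]
    · intro i _ _
      simp only [hsum]
      ring
    · intro i h1 h2
      by_cases e : i = k
      · subst e
        simpa using hmix i h1 h2 hk0
      · simp [e]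
    · intro i h1 h2
      by_cases e : i = k
      · subst e
        simp [hk0]
      · simp [e]
    · intro i j h1 hij h2
      by_cases e : j = k
      · subst e
        simp [hmin i hij h1 (by omega)]
      · simp [e]
  · have hx1 : ∀ i, 1 ≤ i → i ≤ m → x i = 1 := by
      intro i h1 h2
      rcases hxbin i h1 h2 with e | e
      · exact absurd ⟨i, h1, h2, e⟩ hex
      · exact e
    refine ⟨fun _ => 0, by simp, by simp, hx01, ?_, by simp, by simp, by simp⟩
    intro i h1 h2
    simp [hx1 i h1 h2]
end

section
/- The convex hull of F_c^= equals the projection onto the (z,x)-variables of the convex hull of S_c^=; that is, conv(F_c^=) = { (z,x) ∈ ℝ^{1+m} : there exists y ∈ ℝ^m with (z,x,y) ∈ conv(S_c^=) }, where the convex hulls are taken in ℝ^{1+m} and ℝ^{1+2m} respectively. -/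
noncomputable def fracSet {m : ℕ} (x : Fin m → ℝ) : Finset (Fin m) :=
  Finset.univ.filter (fun i => ¬ (x i = 0 ∨ x i = 1))

def Feas {m : ℕ} (p : ℕ) (Z O : Set (Fin m)) (x : Fin m → ℝ) : Prop :=
  (∀ i, 0 ≤ x i ∧ x i ≤ 1) ∧ (∑ i, x i ≤ (p : ℝ)) ∧ (∀ i ∈ Z, x i = 0) ∧ (∀ i ∈ O, x i = 1)

theorem mem_fracSet {m : ℕ} (x : Fin m → ℝ) (i : Fin m) :
    i ∈ fracSet x ↔ ¬ (x i = 0 ∨ x i = 1) := by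
  simp [fracSet]

theorem fracSet_lt {m : ℕ} (x a : Fin m → ℝ) (i : Fin m)
    (h1 : ∀ k, (x k = 0 ∨ x k = 1) → a k = x k)
    (hi : i ∈ fracSet x) (hia : a i = 0 ∨ a i = 1) :
    (fracSet a).card < (fracSet x).card := by
  apply Finset.card_lt_card
  rw [Finset.ssubset_iff_of_subset]
  · exact ⟨i, hi, by rw [mem_fracSet]; exact not_not.2 hia⟩
  · intro k hk
    rw [mem_fracSet] at *
    intro hx
    apply hk
    rw [h1 k hx]; exact hx

theorem shift_step {m p : ℕ} (Z O : Set (Fin m)) (x : Fin m → ℝ) (hx : Feas p Z O x)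
    (i j : Fin m) (hij : i ≠ j) (hi : i ∈ fracSet x) (hj : j ∈ fracSet x) :
    ∃ s : ℝ, 0 < s ∧
      Feas p Z O (fun k => x k + s * ((if k = i then 1 else 0) - (if k = j then 1 else 0))) ∧
      (fracSet (fun k => x k + s * ((if k = i then 1 else 0) - (if k = j then 1 else 0)))).card
        < (fracSet x).card := by
  obtain ⟨hb, hs, hZ, hO⟩ := hx
  have hi' := (mem_fracSet _ _).1 hi
  have hj' := (mem_fracSet _ _).1 hj
  push Not at hi' hj'
  have hi0 : 0 < x i := lt_of_le_of_ne (hb i).1 (Ne.symm hi'.1)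
  have hi1 : x i < 1 := lt_of_le_of_ne (hb i).2 hi'.2
  have hj0 : 0 < x j := lt_of_le_of_ne (hb j).1 (Ne.symm hj'.1)
  have hj1 : x j < 1 := lt_of_le_of_ne (hb j).2 hj'.2
  have hs1 : min (1 - x i) (x j) ≤ 1 - x i := min_le_left _ _
  have hs2 : min (1 - x i) (x j) ≤ x j := min_le_right _ _
  have hs0 : 0 < min (1 - x i) (x j) := lt_min (by linarith) hj0
  have hs3 := min_choice (1 - x i) (x j)
  generalize min (1 - x i) (x j) = s at *
  have hfix : ∀ k, (x k = 0 ∨ x k = 1) →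
      x k + s * ((if k = i then 1 else 0) - (if k = j then 1 else 0)) = x k := by
    intro k hk
    have h1 : k ≠ i := by rintro rfl; tauto
    have h2 : k ≠ j := by rintro rfl; tauto
    simp [h1, h2]
  refine ⟨s, hs0, ⟨?_, ?_, ?_, ?_⟩, ?_⟩
  · intro k
    have := hb k
    by_cases h1 : k = i
    · subst h1
      simp [hij]
      constructor <;> linarith
    · by_cases h2 : k = j
      · subst h2
        simp [h1]
        constructor <;> linarith
      · simpa [h1, h2] using this
  · simpa [Finset.sum_add_distrib, ← Finset.mul_sum, Finset.sum_sub_distrib] using hs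
  · intro k hk
    simp only [hfix k (Or.inl (hZ k hk))]; exact hZ k hk
  · intro k hk
    simp only [hfix k (Or.inr (hO k hk))]; exact hO k hk
  · rcases hs3 with h3 | h3
    · refine fracSet_lt x _ i hfix hi (Or.inr ?_)
      simp [hij, h3]
    · refine fracSet_lt x _ j hfix hj (Or.inl ?_)
      simp [hij.symm, h3]

theorem feas_mem_hull {m p : ℕ} (Z O : Set (Fin m)) (n : ℕ) :
    ∀ x : Fin m → ℝ, Feas p Z O x → (fracSet x).card = n →
      x ∈ convexHull ℝ {v | Feas p Z O v ∧ ∀ i, v i = 0 ∨ v i = 1} := by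
  induction n using Nat.strong_induction_on with
  | _ n ih =>
  intro x hx hn
  by_cases h0 : ∀ i, x i = 0 ∨ x i = 1
  · exact subset_convexHull ℝ _ ⟨hx, h0⟩
  push Not at h0
  obtain ⟨i, hi⟩ := h0
  have hiF : i ∈ fracSet x := by rw [mem_fracSet]; tauto
  by_cases h1 : ∃ j, j ≠ i ∧ j ∈ fracSet x
  · obtain ⟨j, hji, hjF⟩ := h1
    obtain ⟨s, hs, hsF, hsc⟩ := shift_step Z O x hx i j hji.symm hiF hjF
    obtain ⟨t, ht, htF, htc⟩ := shift_step Z O x hx j i hji hjF hiF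
    have ha := ih _ (hn ▸ hsc) _ hsF rfl
    have hb := ih _ (hn ▸ htc) _ htF rfl
    have hst : s + t ≠ 0 := by positivity
    have := (convex_convexHull ℝ {v | Feas p Z O v ∧ ∀ i, v i = 0 ∨ v i = 1}) ha hb
      (a := t / (s + t)) (b := s / (s + t)) (by positivity) (by positivity)
      (by field_simp; ring)
    convert this using 1
    funext k
    simp only [Pi.add_apply, Pi.smul_apply, smul_eq_mul]
    field_simp
    ring
  · push Not at h1
    have hint : ∀ k, k ≠ i → x k = 0 ∨ x k = 1 := by
      intro k hk
      have := h1 k hk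
      rw [mem_fracSet] at this
      tauto
    obtain ⟨hb, hs, hZ, hO⟩ := hx
    have hi0 : 0 < x i := lt_of_le_of_ne (hb i).1 (Ne.symm hi.1)
    have hiZ : i ∉ Z := fun h => hi.1 (hZ i h)
    have hiO : i ∉ O := fun h => hi.2 (hO i h)
    have hsum : ∀ c : ℝ, ∑ k, Function.update x i c k
        = c + ∑ k ∈ Finset.univ.erase i, x k := by
      intro c
      rw [← Finset.add_sum_erase _ _ (Finset.mem_univ i)]
      congr 1
      · simp
      · apply Finset.sum_congr rfl
        intro k hk
        rw [Function.update_of_ne (Finset.ne_of_mem_erase hk)]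
    have hN : ∑ k ∈ Finset.univ.erase i, x k
        = (((Finset.univ.erase i).filter (fun k => x k = 1)).card : ℝ) := by
      rw [Finset.card_filter]
      push_cast
      apply Finset.sum_congr rfl
      intro k hk
      rcases hint k (Finset.ne_of_mem_erase hk) with h | h <;> simp [h]
    have hx' := hsum (x i)
    rw [Function.update_eq_self] at hx'
    generalize ((Finset.univ.erase i).filter (fun k => x k = 1)).card = N at hN
    have hNp : N < p := by
      have : (N : ℝ) < p := by linarith
      exact_mod_cast this
    have hNp' : (N : ℝ) + 1 ≤ p := by exact_mod_cast hNp
    have key : ∀ c : ℝ, (c = 0 ∨ c = 1) → Function.update x i c ∈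
        convexHull ℝ {v | Feas p Z O v ∧ ∀ i, v i = 0 ∨ v i = 1} := by
      intro c hc
      have hv : ∀ k, Function.update x i c k = 0 ∨ Function.update x i c k = 1 := by
        intro k
        by_cases hk : k = i
        · subst hk; simpa using hc
        · rw [Function.update_of_ne hk]; exact hint k hk
      apply subset_convexHull
      refine ⟨⟨?_, ?_, ?_, ?_⟩, hv⟩
      · intro k; rcases hv k with h | h <;> simp [h]
      · rw [hsum, hN]; rcases hc with h | h <;> subst h <;> linarith
      · intro k hk
        rw [Function.update_of_ne (by rintro rfl; exact hiZ hk)]; exact hZ k hk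
      · intro k hk
        rw [Function.update_of_ne (by rintro rfl; exact hiO hk)]; exact hO k hk
    have := (convex_convexHull ℝ {v | Feas p Z O v ∧ ∀ i, v i = 0 ∨ v i = 1})
      (key 0 (Or.inl rfl)) (key 1 (Or.inr rfl))
      (a := 1 - x i) (b := x i) (by linarith [(hb i).2]) hi0.le (by ring)
    convert this using 1
    funext k
    by_cases hk : k = i
    · subst hk; simp
    · simp [Function.update_of_ne hk]; ring

/-- **Convex-hull equivalence for the cardinality-constrained case.**
`conv(F_c^=)` equals the projection onto the `(z,x)`-variables of `conv(S_c^=)`,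
where `F_c^= ⊆ ℝ × ℝ^m` is the mixing set with a cardinality constraint and
`S_c^= ⊆ ℝ × ℝ^m × ℝ^m` is its bilinear reformulation over a simplex. -/
theorem convexHull_mixing_eq_proj_convexHull_bilinear
    (m p : ℕ) (hm : 1 ≤ m) (hp1 : 1 ≤ p) (hpm : p ≤ m)
    (h : Fin m → ℝ) (hmono : Antitone h) (hnonneg : ∀ i, 0 ≤ h i) :
    convexHull ℝ {w : ℝ × (Fin m → ℝ) |
        0 ≤ w.1 ∧ (∀ i, w.2 i = 0 ∨ w.2 i = 1) ∧
        (∀ i, w.2 i = 0 → h i ≤ w.1) ∧ (∑ i, w.2 i ≤ (p : ℝ))}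
      = {w : ℝ × (Fin m → ℝ) | ∃ y : Fin m → ℝ,
          (w.1, w.2, y) ∈ convexHull ℝ {u : ℝ × (Fin m → ℝ) × (Fin m → ℝ) |
            0 ≤ u.1 ∧ (∀ i, 0 ≤ u.2.1 i ∧ u.2.1 i ≤ 1) ∧
            (∑ i, u.2.1 i ≤ (p : ℝ)) ∧
            (∀ j, u.2.2 j = 0 ∨ u.2.2 j = 1) ∧ (∑ j, u.2.2 j ≤ 1) ∧
            (∀ i, (1 - u.2.1 i) * (1 - ∑ j, u.2.2 j) = 0) ∧
            (∀ i, h i * u.2.2 i ≤ u.1 * u.2.2 i) ∧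
            (∀ i, u.2.1 i * u.2.2 i ≤ 0) ∧
            (∀ i j, i < j → (1 - u.2.1 i) * u.2.2 j ≤ 0)}} := by
  apply Set.Subset.antisymm
  · apply convexHull_min
    · rintro ⟨z, x⟩ ⟨hz, hx, hh, hs⟩
      dsimp only at hz hx hh hs
      by_cases hall : ∀ i, x i = 1
      · refine ⟨0, subset_convexHull ℝ _ ⟨hz, ?_, hs, ?_⟩⟩
        · intro i; simp [hall i]
        · simp [hall]
      · have hne : ∃ j, x j = 0 ∧ ∀ i, i < j → x i = 1 := by
          push Not at hall
          obtain ⟨j, hj⟩ := hall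
          have hn : (Finset.univ.filter (fun i => x i = 0)).Nonempty :=
            ⟨j, by simpa using (hx j).resolve_right hj⟩
          refine ⟨_, (Finset.mem_filter.1 (Finset.min'_mem _ hn)).2, ?_⟩
          intro i hi
          refine (hx i).resolve_left fun h0 => ?_
          exact absurd (Finset.min'_le _ i (by simpa using h0)) (not_le.2 hi)
        obtain ⟨j, hj, hlt⟩ := hne
        refine ⟨Pi.single j 1, subset_convexHull ℝ _ ⟨hz, ?_, hs, ?_, ?_, ?_, ?_, ?_, ?_⟩⟩
        · intro i; rcases hx i with h | h <;> simp [h]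
        · intro i
          by_cases hi : i = j
          · subst hi; simp
          · simp [hi]
        · simp
        · simp
        · intro i
          by_cases hi : i = j
          · subst hi; simpa using hh i hj
          · simp [hi]
        · intro i
          by_cases hi : i = j
          · subst hi; simp [hj]
          · simp [hi]
        · intro i k hik
          by_cases hi : k = j
          · subst hi; simp [hlt i hik]
          · simp [hi]
    · rintro ⟨z, x⟩ ⟨y, hy⟩ ⟨z', x'⟩ ⟨y', hy'⟩ a b ha hb hab
      exact ⟨a • y + b • y', (convex_convexHull ℝ _) hy hy' ha hb hab⟩
  · rintro ⟨z, x⟩ ⟨y, hy⟩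
    dsimp only at hy
    set F := convexHull ℝ {w : ℝ × (Fin m → ℝ) |
        0 ≤ w.1 ∧ (∀ i, w.2 i = 0 ∨ w.2 i = 1) ∧
        (∀ i, w.2 i = 0 → h i ≤ w.1) ∧ (∑ i, w.2 i ≤ (p : ℝ))} with hF
    have hFc : Convex ℝ F := convex_convexHull ℝ _
    refine convexHull_min (t := {u : ℝ × (Fin m → ℝ) × (Fin m → ℝ) | (u.1, u.2.1) ∈ F})
      ?_ ?_ hy
    · rintro ⟨z, x, y⟩ ⟨hz, hx, hs, hy, hy1, h1, h2, h3, h4⟩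
      dsimp only at hz hx hs hy hy1 h1 h2 h3 h4
      show (z, x) ∈ F
      by_cases hy0 : ∀ j, y j = 0
      · have hx1 : ∀ i, x i = 1 := by
          intro i
          have := h1 i
          simp [hy0] at this
          linarith
        refine subset_convexHull ℝ _ ⟨hz, fun i => Or.inr (hx1 i), ?_, hs⟩
        intro i hi
        simp [hx1 i] at hi
      · push Not at hy0
        obtain ⟨j, hj⟩ := hy0
        have hj1 : y j = 1 := (hy j).resolve_left hj
        have hzj : h j ≤ z := by simpa [hj1] using h2 j
        have hxj : x j = 0 := le_antisymm (by simpa [hj1] using h3 j) (hx j).1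
        have hlt : ∀ i, i < j → x i = 1 := by
          intro i hi
          have := h4 i j hi
          rw [hj1] at this
          linarith [(hx i).2]
        have hm := feas_mem_hull (p := p) {j} {i | i < j} _ x
          ⟨hx, hs, by rintro i rfl; exact hxj, hlt⟩ rfl
        refine convexHull_min (t := {v : Fin m → ℝ | (z, v) ∈ F}) ?_ ?_ hm
        · rintro v ⟨⟨hv, hvs, -, hvO⟩, hv01⟩
          refine subset_convexHull ℝ _ ⟨hz, hv01, ?_, hvs⟩
          intro i hi
          have : ¬ i < j := fun hlt => by
            have := hvO i hlt
            dsimp only at hi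
            rw [hi] at this
            exact zero_ne_one this
          exact (hmono (not_lt.1 this)).trans hzj
        · intro v hv w hw a b ha hb hab
          have := hFc hv hw ha hb hab
          have e : a • (z, v) + b • (z, w) = (z, a • v + b • w) := by
            ext1
            · simp [← add_mul, hab]
            · rfl
          rw [e] at this
          exact this
    · intro u hu v hv a b ha hb hab
      exact hFc hu hv ha hb hab
end

section
/- Assume 1 ≤ p < m. Let r ∈ {1,…,p}, l ∈ {1,…,r}, and v ∈ {1,…,p−r}, and set s_ι = p−r−v+ι for ι = 1,…,v+1. Let 1 ≤ t_1 < … < t_l ≤ r with the convention t_{l+1} := r+s_1, and let q_1,…,q_v be distinct indices with r+s_ι+1 ≤ q_ι ≤ m for every ι. Define φ_{q_1} = h_{r+s_1} − h_{r+s_2} and, for ι = 2,…,v, φ_{q_ι} = max{ φ_{q_{ι−1}}, h_{r+s_1} − h_{r+s_ι+1} − Σ_{k=1,…,ι−1 : q_k ≥ r+s_ι+1} φ_{q_k} }. Then every (z,x) ∈ F_c^= satisfies z + Σ_{ι=1}^{l} (h_{t_ι} − h_{t_{ι+1}}) x_{t_ι} + Σ_{ι=1}^{v} φ_{q_ι}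 (1 − x_{q_ι}) ≥ h_{t_1}; that is, by setting δ_{t_ι} = 0 for all ι in the BL&P inequality of the cardinality-constrained case, one recovers as valid inequalities exactly the known family with coefficients h_{t_ι} − h_{t_{ι+1}}. -/
theorem blp_inequality_delta_zero_cardinality
    (m p : ℕ) (hm : 1 ≤ m) (hp1 : 1 ≤ p) (hpm : p < m)
    (h : ℕ → ℝ)
    (hmono : ∀ i j : ℕ, 1 ≤ i → i ≤ j → j ≤ m → h j ≤ h i)
    (hnonneg : ∀ i : ℕ, 1 ≤ i → i ≤ m → 0 ≤ h i)
    (r : ℕ) (hr1 : 1 ≤ r) (hrp : r ≤ p)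
    (l : ℕ) (hl1 : 1 ≤ l) (hlr : l ≤ r)
    (v : ℕ) (hv1 : 1 ≤ v) (hvp : v ≤ p - r)
    (t : ℕ → ℕ) (ht1 : 1 ≤ t 1) (htl : t l ≤ r)
    (htmono : ∀ ι κ : ℕ, 1 ≤ ι → ι < κ → κ ≤ l → t ι < t κ)
    (httop : t (l + 1) = r + (p - r - v + 1))
    (q : ℕ → ℕ)
    (hqinj : ∀ ι κ : ℕ, 1 ≤ ι → ι ≤ v → 1 ≤ κ → κ ≤ v → q ι = q κ → ι = κ)
    (hqrange : ∀ ι : ℕ, 1 ≤ ι → ι ≤ v → r + (p - r - v + ι) + 1 ≤ q ι ∧ q ι ≤ m)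
    (φ : ℕ → ℝ)
    (hφ1 : φ 1 = h (r + (p - r - v + 1)) - h (r + (p - r - v + 2)))
    (hφrec : ∀ ι : ℕ, 2 ≤ ι → ι ≤ v →
      φ ι = max (φ (ι - 1))
        (h (r + (p - r - v + 1)) - h (r + (p - r - v + ι) + 1)
          - ∑ k ∈ (Finset.Icc 1 (ι - 1)).filter
              (fun k => r + (p - r - v + ι) + 1 ≤ q k), φ k))
    (z : ℝ) (x : ℕ → ℝ) (hz : 0 ≤ z)
    (hxbin : ∀ i : ℕ, 1 ≤ i → i ≤ m → x i = 0 ∨ x i = 1)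
    (hmix : ∀ i : ℕ, 1 ≤ i → i ≤ m → x i = 0 → h i ≤ z)
    (hcard : ∑ i ∈ Finset.Icc 1 m, x i ≤ (p : ℝ)) :
    h (t 1) ≤ z + (∑ ι ∈ Finset.Icc 1 l, (h (t ι) - h (t (ι + 1))) * x (t ι))
      + ∑ ι ∈ Finset.Icc 1 v, φ ι * (1 - x (q ι)) := by
  obtain ⟨a, ha⟩ : ∃ a, p = a + v := ⟨p - v, by omega⟩
  subst ha
  have e : ∀ i, r + (a + v - r - v + i) = a + i := fun i => by omega
  simp only [e] at httop hqrange hφ1 hφrec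
  have hra : r ≤ a := by omega
  -- monotonicity of the coefficients
  have hstep : ∀ i, 1 ≤ i → i + 1 ≤ v → φ i ≤ φ (i + 1) := by
    intro i h1 h2
    rw [hφrec (i + 1) (by omega) h2]
    exact le_max_left _ _
  have hφmono : ∀ i j, 1 ≤ i → i ≤ j → j ≤ v → φ i ≤ φ j := by
    intro i j h1 hij
    induction j, hij using Nat.le_induction with
    | base => intro _; exact le_rfl
    | succ j hj ih =>
      intro hv
      exact (ih (by omega)).trans (hstep j (by omega) hv)
  have hφ1n : 0 ≤ φ 1 := by
    rw [hφ1]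
    have := hmono (a + 1) (a + 2) (by omega) (by omega) (by omega)
    linarith
  have hφn : ∀ i, 1 ≤ i → i ≤ v → 0 ≤ φ i := fun i h1 h2 =>
    hφ1n.trans (hφmono 1 i le_rfl h1 h2)
  have hφge : ∀ i, 1 ≤ i → i ≤ v → h (a + 1) - h (a + i + 1)
      ≤ φ i + ∑ k ∈ (Finset.Icc 1 (i - 1)).filter (fun k => a + i + 1 ≤ q k), φ k := by
    intro i h1 h2
    rcases Nat.lt_or_ge 1 i with h3 | h3
    · have := hφrec i h3 h2
      have h4 := le_max_right (φ (i - 1)) (h (a + 1) - h (a + i + 1)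
          - ∑ k ∈ (Finset.Icc 1 (i - 1)).filter (fun k => a + i + 1 ≤ q k), φ k)
      rw [← this] at h4
      linarith
    · obtain rfl : i = 1 := by omega
      simp [hφ1]
  have hx0 : ∀ i, 1 ≤ i → i ≤ m → 0 ≤ x i := fun i h1 h2 => by
    rcases hxbin i h1 h2 with h | h <;> rw [h] <;> norm_num
  have hx1 : ∀ i, 1 ≤ i → i ≤ m → x i ≤ 1 := fun i h1 h2 => by
    rcases hxbin i h1 h2 with h | h <;> rw [h] <;> norm_num
  have hterm : ∀ k ∈ Finset.Icc 1 v, 0 ≤ φ k * (1 - x (q k)) := by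
    intro k hk
    rw [Finset.mem_Icc] at hk
    have := hqrange k hk.1 hk.2
    exact mul_nonneg (hφn k hk.1 hk.2) (by linarith [hx1 (q k) (by omega) (by omega)])
  have hΦ := Finset.sum_nonneg hterm
  -- the core inequality
  have hcore : h (a + 1) ≤ z + ∑ ι ∈ Finset.Icc 1 v, φ ι * (1 - x (q ι)) := by
    have hex : ∃ i, 1 ≤ i ∧ i ≤ m ∧ x i = 0 := by
      by_contra! hne
      have : ∑ i ∈ Finset.Icc 1 m, x i = ∑ i ∈ Finset.Icc 1 m, (1:ℝ) :=
        Finset.sum_congr rfl fun i hi => by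
          rw [Finset.mem_Icc] at hi
          exact (hxbin i hi.1 hi.2).resolve_left (hne i hi.1 hi.2)
      rw [this] at hcard
      simp at hcard
      have : m ≤ a + v := by exact_mod_cast hcard
      omega
    classical
    obtain ⟨n, ⟨hn1, hnm, hxn⟩, hmin⟩ : ∃ n, (1 ≤ n ∧ n ≤ m ∧ x n = 0) ∧
        ∀ j, 1 ≤ j → j < n → x j = 1 := by
      refine ⟨Nat.find hex, Nat.find_spec hex, fun j h1 h2 => ?_⟩
      have h3 := Nat.find_min hex h2
      have h4 := (Nat.find_spec hex).2.1
      exact (hxbin j h1 (by omega)).resolve_left fun h5 => h3 ⟨h1, by omega, h5⟩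
    have hzn := hmix n hn1 hnm hxn
    rcases Nat.lt_or_ge (a + 1) n with hlt | hge
    swap
    · linarith [hmono n (a + 1) hn1 hge (by omega)]
    obtain ⟨c, rfl⟩ : ∃ c, n = a + c + 1 := ⟨n - a - 1, by omega⟩
    have hsplit : ∑ i ∈ Finset.Icc 1 m, x i
        = (a + c : ℕ) + ∑ i ∈ Finset.Icc (a + c + 1) m, x i := by
      have h1 : Finset.Icc 1 m = Finset.Icc 1 (a + c) ∪ Finset.Icc (a + c + 1) m := by
        ext i; simp only [Finset.mem_union, Finset.mem_Icc]; omega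
      rw [h1, Finset.sum_union (by
        rw [Finset.disjoint_left]; intro i; simp only [Finset.mem_Icc]; omega)]
      congr 1
      rw [Finset.sum_congr rfl (g := fun _ => (1:ℝ)) (fun i hi => by
        rw [Finset.mem_Icc] at hi; exact hmin i hi.1 (by omega))]
      simp
    rw [hsplit] at hcard
    have htail0 : 0 ≤ ∑ i ∈ Finset.Icc (a + c + 1) m, x i :=
      Finset.sum_nonneg fun i hi => by
        rw [Finset.mem_Icc] at hi; exact hx0 i (by omega) hi.2
    have hcv : c ≤ v := by
      have : ((a + c : ℕ) : ℝ) ≤ (a + v : ℕ) := by linarith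
      have : a + c ≤ a + v := by exact_mod_cast this
      omega
    set K := (Finset.Icc 1 (c - 1)).filter (fun k => a + c + 1 ≤ q k) with hK
    have hKm : ∀ k ∈ K, 1 ≤ k ∧ k < c ∧ a + c + 1 ≤ q k := by
      intro k hk
      rw [hK, Finset.mem_filter, Finset.mem_Icc] at hk
      omega
    have hdisj : Disjoint K (Finset.Icc c v) := by
      rw [Finset.disjoint_left]; intro i hi; rw [Finset.mem_Icc]
      have := hKm i hi; omega
    have hUm : ∀ k ∈ K ∪ Finset.Icc c v, 1 ≤ k ∧ k ≤ v ∧ a + c + 1 ≤ q k ∧ q k ≤ m := by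
      intro k hk
      rw [Finset.mem_union, Finset.mem_Icc] at hk
      rcases hk with hk | hk
      · have h1 := hKm k hk
        have := hqrange k (by omega) (by omega)
        omega
      · have := hqrange k (by omega) (by omega)
        omega
    have hxU : ∑ k ∈ K ∪ Finset.Icc c v, x (q k) ≤ ∑ i ∈ Finset.Icc (a + c + 1) m, x i := by
      have hinj : Set.InjOn q (K ∪ Finset.Icc c v : Finset ℕ) := by
        intro i hi j hj hij
        have h1 := hUm i hi
        have h2 := hUm j hj
        exact hqinj i j h1.1 h1.2.1 h2.1 h2.2.1 hij
      rw [← Finset.sum_image (f := x) hinj]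
      apply Finset.sum_le_sum_of_subset_of_nonneg
      · intro i hi
        rw [Finset.mem_image] at hi
        obtain ⟨k, hk, rfl⟩ := hi
        have := hUm k hk
        rw [Finset.mem_Icc]; omega
      · intro i hi _
        rw [Finset.mem_Icc] at hi; exact hx0 i (by omega) hi.2
    have hsub : ∑ k ∈ K ∪ Finset.Icc c v, φ k * (1 - x (q k))
        ≤ ∑ k ∈ Finset.Icc 1 v, φ k * (1 - x (q k)) := by
      apply Finset.sum_le_sum_of_subset_of_nonneg
      · intro k hk
        have := hUm k hk
        rw [Finset.mem_Icc]; omega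
      · intro k hk _; exact hterm k hk
    rw [Finset.sum_union hdisj] at hsub hxU
    have hA : ∑ k ∈ K, (φ k - φ c * x (q k)) ≤ ∑ k ∈ K, φ k * (1 - x (q k)) := by
      apply Finset.sum_le_sum
      intro k hk
      have h1 := hKm k hk
      have h2 := hUm k (Finset.mem_union_left _ hk)
      have h3 := mul_le_mul_of_nonneg_right (hφmono k c h1.1 (by omega) hcv)
        (hx0 (q k) (by omega) (by omega))
      linarith
    have hB : ∑ k ∈ Finset.Icc c v, (φ c - φ c * x (q k))
        ≤ ∑ k ∈ Finset.Icc c v, φ k * (1 - x (q k)) := by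
      apply Finset.sum_le_sum
      intro k hk
      have h2 := hUm k (Finset.mem_union_right _ hk)
      rw [Finset.mem_Icc] at hk
      have h3 := mul_le_mul_of_nonneg_right (hφmono c k (by omega) hk.1 hk.2)
        (sub_nonneg.2 (hx1 (q k) (by omega) (by omega)))
      linarith
    rw [Finset.sum_sub_distrib, ← Finset.mul_sum] at hA hB
    rw [Finset.sum_const, Nat.card_Icc, nsmul_eq_mul, Nat.cast_sub (by omega)] at hB
    push_cast at hB hcard
    have hc := hφge c (by omega) hcv
    have h5 := mul_le_mul_of_nonneg_left (show ∑ k ∈ K, x (q k) + ∑ k ∈ Finset.Icc c v, x (q k)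
      ≤ (v:ℝ) - c by linarith) (hφn c (by omega) hcv)
    linarith
  -- telescoping
  have htr : ∀ i, 1 ≤ i → i ≤ l → 1 ≤ t i ∧ t i ≤ r := by
    intro i h1 h2
    constructor
    · rcases Nat.lt_or_ge 1 i with h3 | h3
      · have := htmono 1 i le_rfl h3 h2; omega
      · obtain rfl : i = 1 := by omega
        exact ht1
    · rcases Nat.lt_or_ge i l with h3 | h3
      · have := htmono i l h1 h3 le_rfl; omega
      · obtain rfl : i = l := by omega
        exact htl
  have hd : ∀ i, 1 ≤ i → i ≤ l → h (t (i + 1)) ≤ h (t i) := by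
    intro i h1 h2
    have h3 := htr i h1 h2
    rcases Nat.lt_or_ge i l with h4 | h4
    · have h5 := htr (i + 1) (by omega) h4
      exact hmono _ _ h3.1 (htmono i (i + 1) h1 (by omega) h4).le (by omega)
    · obtain rfl : i = l := by omega
      rw [httop]
      exact hmono _ _ h3.1 (by omega) (by omega)
  have key : ∀ n, n ≤ l →
      h (t 1) ≤ z + ∑ ι ∈ Finset.Icc 1 n, (h (t ι) - h (t (ι + 1))) * x (t ι) ∨
      ∑ ι ∈ Finset.Icc 1 n, (h (t ι) - h (t (ι + 1))) * x (t ι) = h (t 1) - h (t (n + 1)) := by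
    intro n
    induction n with
    | zero => intro _; right; simp
    | succ n ih =>
      intro hn
      rw [Finset.sum_Icc_succ_top (by omega)]
      have h1 := htr (n + 1) (by omega) hn
      have h2 := hd (n + 1) (by omega) hn
      rcases ih (by omega) with h3 | h3
      · left
        have := mul_nonneg (sub_nonneg.2 h2) (hx0 (t (n + 1)) h1.1 (by omega))
        linarith
      · rcases hxbin (t (n + 1)) h1.1 (by omega) with h4 | h4
        · left
          have := hmix _ h1.1 (by omega) h4
          rw [h3, h4]; linarith
        · right
          rw [h3, h4]; ring
  rcases key l le_rfl with h1 | h1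
  · linarith
  · rw [h1, httop]; linarith
end

section
/- Let (h_1,…,h_{10}) = (20,18,14,11,6,5,4,3,2,1) and let F = {(z,x) ∈ ℝ_{≥0} × {0,1}^{10} : for every i ∈ {1,…,10}, x_i = 0 implies z ≥ h_i, and Σ_{i=1}^{10} x_i ≤ 4}. Then every (z,x) ∈ F satisfies z + 3 x_1 + 3 (1 − x_6) + 5 (1 − x_7) + 3 (1 − x_8) ≥ 20. -/
/-- **Example: a facet-defining BL&P inequality for the mixing set with a cardinality
constraint** with `(h_1,…,h_10) = (20,18,14,11,6,5,4,3,2,1)` and `p = 4`: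
every `(z,x) ∈ F` satisfies `z + 3 x_1 + 3(1 − x_6) + 5(1 − x_7) + 3(1 − x_8) ≥ 20`. -/
theorem example_inequality_mixing_cardinality_two
    (z : ℝ) (x : ℕ → ℝ) (hz : 0 ≤ z)
    (hxbin : ∀ i : ℕ, 1 ≤ i → i ≤ 10 → x i = 0 ∨ x i = 1)
    (hx1 : x 1 = 0 → 20 ≤ z) (hx2 : x 2 = 0 → 18 ≤ z)
    (hx3 : x 3 = 0 → 14 ≤ z) (hx4 : x 4 = 0 → 11 ≤ z)
    (hx5 : x 5 = 0 → 6 ≤ z) (hx6 : x 6 = 0 → 5 ≤ z)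
    (hx7 : x 7 = 0 → 4 ≤ z) (hx8 : x 8 = 0 → 3 ≤ z)
    (hx9 : x 9 = 0 → 2 ≤ z) (hx10 : x 10 = 0 → 1 ≤ z)
    (hcard : ∑ i ∈ Finset.Icc 1 10, x i ≤ 4) :
    20 ≤ z + 3 * x 1 + 3 * (1 - x 6) + 5 * (1 - x 7) + 3 * (1 - x 8) := by
  have b : ∀ i : ℕ, 1 ≤ i → i ≤ 10 → 0 ≤ x i ∧ x i ≤ 1 := by
    intro i h1 h2
    rcases hxbin i h1 h2 with h | h <;> rw [h] <;> norm_num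
  have e : ∑ i ∈ Finset.Icc 1 10, x i
      = x 1 + x 2 + x 3 + x 4 + x 5 + x 6 + x 7 + x 8 + x 9 + x 10 := by
    rw [show Finset.Icc 1 10 = Finset.Ico 1 11 from rfl, Finset.sum_Ico_eq_sum_range]
    simp [Finset.sum_range_succ]
  rw [e] at hcard
  obtain ⟨l1, u1⟩ := b 1 (by norm_num) (by norm_num)
  obtain ⟨l5, u5⟩ := b 5 (by norm_num) (by norm_num)
  obtain ⟨l6, u6⟩ := b 6 (by norm_num) (by norm_num)
  obtain ⟨l7, u7⟩ := b 7 (by norm_num) (by norm_num)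
  obtain ⟨l8, u8⟩ := b 8 (by norm_num) (by norm_num)
  obtain ⟨l9, u9⟩ := b 9 (by norm_num) (by norm_num)
  obtain ⟨l10, u10⟩ := b 10 (by norm_num) (by norm_num)
  obtain ⟨l3, u3⟩ := b 3 (by norm_num) (by norm_num)
  obtain ⟨l4, u4⟩ := b 4 (by norm_num) (by norm_num)
  rcases hxbin 1 (by norm_num) (by norm_num) with h1 | h1
  · linarith [hx1 h1]
  rcases hxbin 2 (by norm_num) (by norm_num) with h2 | h2
  · linarith [hx2 h2]
  rcases hxbin 3 (by norm_num) (by norm_num) with h3 | h3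
  · linarith [hx3 h3]
  rcases hxbin 4 (by norm_num) (by norm_num) with h4 | h4
  · linarith [hx4 h4]
  rcases hxbin 5 (by norm_num) (by norm_num) with h5 | h5
  · linarith [hx5 h5]
  · linarith
end

section
/- Let (h_1,…,h_{10}) = (40,38,34,31,26,16,8,4,2,1), let π_i = 1/8 for i ∈ {1,2,3,4} and π_i = 1/12 for i ∈ {5,…,10}, and let ε = 1/2. Let F = {(z,x) ∈ ℝ_{≥0} × {0,1}^{10} : for every i ∈ {1,…,10}, x_i = 0 implies z ≥ h_i, and Σ_{i=1}^{10} π_i x_i ≤ 1/2}. Then every (z,x) ∈ F satisfies z + 2 x_1 + 4 (1 − x_4) + 4 (1 − x_7) + 8 (1 − x_8) ≥ 40. -/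
/-- **Example (Zhao et al.): a facet-defining inequality for the mixing set with a
knapsack constraint** with `(h_1,…,h_10) = (40,38,34,31,26,16,8,4,2,1)`,
`π_i = 1/8` for `i ∈ {1,2,3,4}`, `π_i = 1/12` for `i ∈ {5,…,10}`, and `ε = 1/2`:
every `(z,x) ∈ F` satisfies `z + 2 x_1 + 4(1 − x_4) + 4(1 − x_7) + 8(1 − x_8) ≥ 40`. -/
theorem example_inequality_mixing_knapsack
    (z : ℝ) (x : ℕ → ℝ) (hz : 0 ≤ z)
    (hxbin : ∀ i : ℕ, 1 ≤ i → i ≤ 10 → x i = 0 ∨ x i = 1)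
    (hx1 : x 1 = 0 → 40 ≤ z) (hx2 : x 2 = 0 → 38 ≤ z)
    (hx3 : x 3 = 0 → 34 ≤ z) (hx4 : x 4 = 0 → 31 ≤ z)
    (hx5 : x 5 = 0 → 26 ≤ z) (hx6 : x 6 = 0 → 16 ≤ z)
    (hx7 : x 7 = 0 → 8 ≤ z) (hx8 : x 8 = 0 → 4 ≤ z)
    (hx9 : x 9 = 0 → 2 ≤ z) (hx10 : x 10 = 0 → 1 ≤ z)
    (hknap : (1 / 8 : ℝ) * (x 1 + x 2 + x 3 + x 4)
      + (1 / 12 : ℝ) * (x 5 + x 6 + x 7 + x 8 + x 9 + x 10) ≤ 1 / 2) :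
    40 ≤ z + 2 * x 1 + 4 * (1 - x 4) + 4 * (1 - x 7) + 8 * (1 - x 8) := by
  have b : ∀ i : ℕ, 1 ≤ i → i ≤ 10 → 0 ≤ x i ∧ x i ≤ 1 := by
    intro i h1 h2
    rcases hxbin i h1 h2 with h | h <;> rw [h] <;> norm_num
  have b4 := b 4 (by norm_num) (by norm_num)
  have b5 := b 5 (by norm_num) (by norm_num)
  have b6 := b 6 (by norm_num) (by norm_num)
  have b7 := b 7 (by norm_num) (by norm_num)
  have b8 := b 8 (by norm_num) (by norm_num)
  have b9 := b 9 (by norm_num) (by norm_num)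
  have b10 := b 10 (by norm_num) (by norm_num)
  have b1 := b 1 (by norm_num) (by norm_num)
  rcases hxbin 1 (by norm_num) (by norm_num) with h1 | h1
  · linarith [hx1 h1]
  rcases hxbin 2 (by norm_num) (by norm_num) with h2 | h2
  · linarith [hx2 h2]
  rcases hxbin 7 (by norm_num) (by norm_num) with h7 | h7 <;>
  rcases hxbin 8 (by norm_num) (by norm_num) with h8 | h8 <;>
  rcases hxbin 4 (by norm_num) (by norm_num) with h4 | h4 <;>
  rcases hxbin 3 (by norm_num) (by norm_num) with h3 | h3 <;>
  rcases hxbin 5 (by norm_num) (by norm_num) with h5 | h5 <;>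
  simp only [h1, h2, h3, h4, h5, h7, h8, forall_const] at * <;> linarith
end

section
/- Let m ≥ 1 and h_1 ≥ h_2 ≥ … ≥ h_m ≥ 0, and let F = {(z,x) ∈ ℝ_{≥0} × {0,1}^m : for every i ∈ {1,…,m}, x_i = 0 implies z ≥ h_i} be the mixing set. Then the convex hull of F (taken in ℝ^{1+m}) equals the set of all (z,x) ∈ ℝ_{≥0} × [0,1]^m such that for every l ≥ 1 and every choice of indices 1 ≤ t_1 < t_2 < … < t_l ≤ m, the star inequality z + Σ_{ι=1}^{l} (h_{t_ι} − h_{t_{ι+1}}) x_{t_ι} ≥ h_{t_1} holds, with the convention h_{t_{l+1}} := 0. -/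
open MeasureTheory in
lemma mix_mem_hull {m : ℕ} (x : Fin m → ℝ) (hx : ∀ i, 0 ≤ x i ∧ x i ≤ 1) :
    x ∈ convexHull ℝ (Set.range (fun (θ : ℝ) (i : Fin m) => if θ ≤ x i then (1 : ℝ) else 0)) := by
  set X : ℝ → Fin m → ℝ := fun θ i => if θ ≤ x i then (1 : ℝ) else 0 with hX
  have hfin : (Set.range X).Finite := by
    apply (Set.Finite.pi' (fun _ : Fin m => Set.toFinite ({0, 1} : Set ℝ))).subset
    rintro _ ⟨θ, rfl⟩ i
    by_cases hh : θ ≤ x i <;> simp [hX, hh]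
  let μ : Measure ℝ := volume.restrict (Set.Ioc 0 1)
  have : IsProbabilityMeasure μ := ⟨by simp [μ]⟩
  have hXi : ∀ i, (fun θ => X θ i) = (Set.Iic (x i)).indicator (fun _ => (1 : ℝ)) := by
    intro i
    ext θ
    simp [hX, Set.indicator_apply]
  have hint : ∀ i, Integrable (fun θ => X θ i) μ := by
    intro i
    rw [hXi]
    exact (integrable_const 1).indicator measurableSet_Iic
  have hmem := (convex_convexHull ℝ (Set.range X)).integral_mem (μ := μ) (f := X)
    (hfin.isClosed_convexHull ℝ)
    (Filter.Eventually.of_forall fun θ => subset_convexHull ℝ _ ⟨θ, rfl⟩)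
    (Integrable.of_eval hint)
  convert hmem using 1
  ext i
  rw [eval_integral hint, hXi, integral_indicator measurableSet_Iic]
  have : Set.Iic (x i) ∩ Set.Ioc 0 1 = Set.Ioc 0 (x i) := by
    ext θ
    have := hx i
    simp only [Set.mem_inter_iff, Set.mem_Iic, Set.mem_Ioc]
    constructor
    · rintro ⟨a, b, c⟩; exact ⟨b, a⟩
    · rintro ⟨a, b⟩; exact ⟨b, a, by linarith⟩
  simp [μ, Measure.restrict_restrict measurableSet_Iic, this, (hx i).1]

lemma mix_chain {m : ℕ} (hm : 1 ≤ m) (x : Fin m → ℝ) :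
    ∃ (l : ℕ) (t : Fin (l + 1) → Fin m), StrictMono t ∧ (∀ a b, a ≤ b → x (t b) ≤ x (t a)) ∧
      ∀ i, ∃ k, t k ≤ i ∧ x (t k) ≤ x i := by
  classical
  set T : Finset (Fin m) := Finset.univ.filter (fun i => ∀ j < i, x i < x j) with hT
  have key : ∀ n : ℕ, ∀ i : Fin m, (i : ℕ) = n → ∃ j ∈ T, j ≤ i ∧ x j ≤ x i := by
    intro n
    induction n using Nat.strong_induction_on with
    | _ n ih =>
      intro i hi
      by_cases hiT : i ∈ T
      · exact ⟨i, hiT, le_rfl, le_rfl⟩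
      · simp only [hT, Finset.mem_filter, Finset.mem_univ, true_and, not_forall, not_lt] at hiT
        obtain ⟨j, hj, hxj⟩ := hiT
        obtain ⟨k, hk, hkj, hxk⟩ := ih j (by rw [← hi]; exact hj) j rfl
        exact ⟨k, hk, hkj.trans hj.le, hxk.trans hxj⟩
  obtain ⟨j0, hj0, -⟩ := key 0 ⟨0, hm⟩ rfl
  have hpos : 0 < T.card := Finset.card_pos.2 ⟨j0, hj0⟩
  obtain ⟨l, hl⟩ : ∃ l, T.card = l + 1 := ⟨T.card - 1, by omega⟩
  refine ⟨l, T.orderEmbOfFin hl, (T.orderEmbOfFin hl).strictMono, ?_, ?_⟩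
  · intro a b hab
    rcases hab.eq_or_lt with rfl | hlt
    · exact le_rfl
    · have := T.orderEmbOfFin_mem hl b
      simp only [hT, Finset.mem_filter, Finset.mem_univ, true_and] at this
      exact (this _ ((T.orderEmbOfFin hl).strictMono hlt)).le
  · intro i
    obtain ⟨j, hj, h1, h2⟩ := key i i rfl
    have : j ∈ Set.range (T.orderEmbOfFin hl) := by
      rw [Finset.range_orderEmbOfFin]; exact hj
    obtain ⟨k, rfl⟩ := this
    exact ⟨k, h1, h2⟩

lemma mix_sum {m : ℕ} (h : Fin m → ℝ) (hmono : Antitone h) (hnonneg : ∀ i, 0 ≤ h i)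
    (l : ℕ) (t : Fin (l + 1) → Fin m) (ht : StrictMono t) :
    ∃ g : ℕ → ℝ, Antitone g ∧ (∀ ι : Fin (l + 1), g ι = h (t ι)) ∧ g (l + 1) = 0 ∧
      ∀ u : Fin m → ℝ, ∃ b : ℕ → ℝ, (∀ ι : Fin (l + 1), b ι = u (t ι)) ∧
      ∑ ι : Fin (l + 1), (h (t ι) - (if hlt : (ι : ℕ) + 1 < l + 1 then h (t ⟨(ι : ℕ) + 1, hlt⟩)
                else 0)) * u (t ι) = ∑ i ∈ Finset.range (l + 1), (g i - g (i + 1)) * b i := by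
  refine ⟨fun k => if hk : k < l + 1 then h (t ⟨k, hk⟩) else 0, ?_, ?_, ?_, ?_⟩
  · intro a b hab
    dsimp only
    split_ifs with h1 h2
    · exact hmono (ht.monotone hab)
    · omega
    · exact hnonneg _
    · exact le_rfl
  · intro ι
    exact dif_pos ι.isLt
  · simp
  · intro u
    refine ⟨fun k => if hk : k < l + 1 then u (t ⟨k, hk⟩) else 0, ?_, ?_⟩
    · intro ι
      exact dif_pos ι.isLt
    · rw [Finset.sum_range]
      apply Finset.sum_congr rfl
      intro ι _
      simp [ι.isLt]

lemma mix_lower (g b : ℕ → ℝ) (hg : Antitone g) (z : ℝ) (n : ℕ)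
    (hb : ∀ i < n, b i = 0 ∨ b i = 1) (hz : ∀ i < n, b i = 0 → g i ≤ z) :
    g 0 ≤ z + ∑ i ∈ Finset.range n, (g i - g (i + 1)) * b i ∨
      ∑ i ∈ Finset.range n, (g i - g (i + 1)) * b i = g 0 - g n := by
  induction n with
  | zero => right; simp
  | succ n ih =>
    rw [Finset.sum_range_succ]
    have hgn := hg (Nat.le_succ n)
    simp only [Nat.succ_eq_add_one] at hgn
    rcases ih (fun i hi => hb i (by omega)) (fun i hi => hz i (by omega)) with h1 | h1
    · left
      rcases hb n (by omega) with h2 | h2 <;> rw [h2] <;> linarith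
    · rcases hb n (by omega) with h2 | h2
      · left
        have := hz n (by omega) h2
        rw [h1, h2]; linarith
      · right
        rw [h1, h2]; ring

lemma mix_upper (g b : ℕ → ℝ) (hg : Antitone g) (k n : ℕ) (hk : k ≤ n)
    (hb : ∀ i < n, b i ≤ 1) (hz : ∀ i < n, k ≤ i → b i = 0) :
    ∑ i ∈ Finset.range n, (g i - g (i + 1)) * b i ≤ g 0 - g k := by
  rw [← Finset.sum_range_sub', ← Finset.sum_range_add_sum_Ico _ hk]
  have h2 : ∑ i ∈ Finset.Ico k n, (g i - g (i + 1)) * b i = 0 := by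
    apply Finset.sum_eq_zero
    intro i hi
    rw [Finset.mem_Ico] at hi
    rw [hz i hi.2 hi.1, mul_zero]
  rw [h2, add_zero]
  apply Finset.sum_le_sum
  intro i hi
  rw [Finset.mem_range] at hi
  have := hg (Nat.le_succ i)
  simp only [Nat.succ_eq_add_one] at this
  have := hb i (by omega)
  nlinarith


/-- **The star inequalities describe the convex hull of the mixing set.**
For `m ≥ 1` and `h` antitone and nonnegative on `Fin m`, the convex hull of
`F = {(z,x) ∈ ℝ₊ × {0,1}^m : x i = 0 → z ≥ h i}` equals the set of all
`(z,x) ∈ ℝ₊ × [0,1]^m` satisfying every star inequality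
`z + ∑_ι (h (t ι) − h (t (ι+1))) x (t ι) ≥ h (t 0)` over all `l ≥ 0` and all strictly
increasing `t : Fin (l+1) → Fin m`, with the convention that the term following the
last index is `0`. -/
theorem convexHull_mixing_eq_star_inequalities
    (m : ℕ) (hm : 1 ≤ m) (h : Fin m → ℝ)
    (hmono : Antitone h) (hnonneg : ∀ i, 0 ≤ h i) :
    convexHull ℝ {w : ℝ × (Fin m → ℝ) |
        0 ≤ w.1 ∧ (∀ i, w.2 i = 0 ∨ w.2 i = 1) ∧ (∀ i, w.2 i = 0 → h i ≤ w.1)}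
      = {w : ℝ × (Fin m → ℝ) |
          0 ≤ w.1 ∧ (∀ i, 0 ≤ w.2 i ∧ w.2 i ≤ 1) ∧
          ∀ (l : ℕ) (t : Fin (l + 1) → Fin m), StrictMono t →
            h (t 0) ≤ w.1 + ∑ ι : Fin (l + 1),
              (h (t ι) - (if hlt : (ι : ℕ) + 1 < l + 1 then h (t ⟨(ι : ℕ) + 1, hlt⟩)
                else 0)) * w.2 (t ι)} := by
  apply Set.Subset.antisymm
  · apply convexHull_min
    · rintro ⟨z, u⟩ ⟨h0, h01, hh⟩
      simp only at h0 h01 hh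
      refine ⟨h0, fun i => ?_, ?_⟩
      · rcases h01 i with h1 | h1 <;> simp [h1]
      · intro l t ht
        obtain ⟨g, hg, hgt, hgl, hs⟩ := mix_sum h hmono hnonneg l t ht
        obtain ⟨b, hb, hs⟩ := hs u
        simp only
        rw [hs]
        have hg0 : g 0 = h (t 0) := by simpa using hgt 0
        have := mix_lower g b hg z (l + 1)
          (fun i hi => by rw [hb ⟨i, hi⟩]; exact h01 _)
          (fun i hi => by rw [hb ⟨i, hi⟩, hgt ⟨i, hi⟩]; exact hh _)
        rcases this with h1 | h1 <;> linarith
    · rintro ⟨z, u⟩ ⟨h0, h01, hh⟩ ⟨z', u'⟩ ⟨h0', h01', hh'⟩ a b ha hb hab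
      simp only at h0 h01 hh h0' h01' hh'
      refine ⟨?_, fun i => ?_, ?_⟩
      · simp only [Prod.smul_mk, Prod.mk_add_mk, smul_eq_mul]; positivity
      · simp only [Prod.smul_mk, Prod.mk_add_mk, smul_eq_mul, Pi.add_apply, Pi.smul_apply]
        obtain ⟨p, q⟩ := h01 i
        obtain ⟨p', q'⟩ := h01' i
        refine ⟨by positivity, by nlinarith⟩
      · intro l t ht
        have e1 := mul_le_mul_of_nonneg_left (hh l t ht) ha
        have e2 := mul_le_mul_of_nonneg_left (hh' l t ht) hb
        rw [mul_add, Finset.mul_sum] at e1 e2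
        have e3 := add_le_add e1 e2
        rw [← add_mul, hab, one_mul, add_add_add_comm, ← Finset.sum_add_distrib] at e3
        refine e3.trans_eq ?_
        simp only [Prod.smul_mk, Prod.mk_add_mk, smul_eq_mul, Pi.add_apply, Pi.smul_apply]
        congr 1
        apply Finset.sum_congr rfl
        intro ι _
        ring
  · rintro ⟨z, x⟩ ⟨h0, h01, hh⟩
    simp only at h0 h01 hh
    obtain ⟨l, t, ht, hxt, hcov⟩ := mix_chain hm x
    have hstar := hh l t ht
    obtain ⟨g, hg, hgt, hgl, hs⟩ := mix_sum h hmono hnonneg l t ht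
    have hg0 : g 0 = h (t 0) := by simpa using hgt 0
    set c : Fin (l + 1) → ℝ := fun ι => (h (t ι) - (if hlt : (ι : ℕ) + 1 < l + 1 then
      h (t ⟨(ι : ℕ) + 1, hlt⟩) else 0)) with hc
    change ∀ u : Fin m → ℝ, ∃ b : ℕ → ℝ, (∀ ι : Fin (l + 1), b ι = u (t ι)) ∧
      ∑ ι, c ι * u (t ι) = _ at hs
    change h (t 0) ≤ z + ∑ ι, c ι * x (t ι) at hstar
    set F := {w : ℝ × (Fin m → ℝ) |
        0 ≤ w.1 ∧ (∀ i, w.2 i = 0 ∨ w.2 i = 1) ∧ (∀ i, w.2 i = 0 → h i ≤ w.1)} with hF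
    have hconv : Convex ℝ {u : Fin m → ℝ |
        (z + ∑ ι, c ι * x (t ι) - ∑ ι, c ι * u (t ι), u) ∈ convexHull ℝ F} := by
      intro u hu v hv a b ha hb hab
      have := convex_convexHull ℝ F hu hv ha hb hab
      simp only [Set.mem_setOf_eq]
      convert this using 1
      simp only [Prod.smul_mk, Prod.mk_add_mk, smul_eq_mul, Pi.add_apply, Pi.smul_apply]
      congr 1
      have : ∑ ι, c ι * (a * u (t ι) + b * v (t ι)) =
          a * ∑ ι, c ι * u (t ι) + b * ∑ ι, c ι * v (t ι) := by
        rw [Finset.mul_sum, Finset.mul_sum, ← Finset.sum_add_distrib]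
        apply Finset.sum_congr rfl
        intro ι _
        ring
      rw [this]
      linear_combination (-(z + ∑ ι, c ι * x (t ι))) * hab
    have hx := fun hsub => convexHull_min hsub hconv (mix_mem_hull x h01)
    suffices hsub : _ by simpa using hx hsub
    · rintro _ ⟨θ, rfl⟩
      apply subset_convexHull
      set u : Fin m → ℝ := fun i => if θ ≤ x i then 1 else 0 with hu
      obtain ⟨b, hb, hs⟩ := hs u
      have hb1 : ∀ i < l + 1, b i ≤ 1 := by
        intro i hi
        rw [hb ⟨i, hi⟩]
        simp only [hu]
        split_ifs <;> norm_num
      refine ⟨?_, ?_, ?_⟩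
      · simp only
        rw [hs]
        have := mix_upper g b hg (l + 1) (l + 1) le_rfl hb1 (fun i hi hi' => by omega)
        linarith
      · intro i
        by_cases hi : θ ≤ x i <;> simp [hu, hi]
      · intro i hi
        have hi : x i < θ := by
          by_contra hcon
          simp [hu, not_lt.1 hcon] at hi
        obtain ⟨k, hk1, hk2⟩ := hcov i
        simp only
        rw [hs]
        have := mix_upper g b hg k (l + 1) k.isLt.le hb1 (fun j hj hkj => by
          rw [hb ⟨j, hj⟩]
          have h3 := hxt k ⟨j, hj⟩ hkj
          have h4 : ¬ θ ≤ x (t ⟨j, hj⟩) := by linarith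
          simp [hu, h4])
        rw [hgt k] at this
        have := hmono hk1
        linarith
end
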